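/- arXiv:2407.05095 — 3 statements merged into one kernel-verified Lean document; each statement's English description precedes it below -/
import Mathlib

section
/- Let ϖ ⊂ Ω_{C°} be a nonempty compact set and let K_j ∈ K(C,ϖ) for j ∈ ℕ₀. If K_j → K₀ as j → ∞ (in the sense of convergence of C-pseudo-cones), then the Θ-weighted cone-volume measures converge weakly: V_{K_j}^Θ → V_{K₀}^Θ. -/
open MeasureTheory Set Filter
open scoped RealInnerProductSpace ENNReal Topology Pointwise NNReal

noncomputable section

abbrev En (n : ℕ) := EuclideanSpace ℝ (Fin n)

/-- `C` is a pointed closed convex cone with nonempty interior. -/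
def IsGoodCone (n : ℕ) (C : Set (En n)) : Prop :=
  IsClosed C ∧ Convex ℝ C ∧ (∀ x ∈ C, ∀ r : ℝ, 0 ≤ r → r • x ∈ C) ∧
    C ∩ (-C) = {0} ∧ (interior C).Nonempty

/-- The dual cone `C° = {x : ⟨x,y⟩ ≤ 0 ∀ y ∈ C}`. -/
def dualCone (n : ℕ) (C : Set (En n)) : Set (En n) := {x | ∀ y ∈ C, ⟪x, y⟫ ≤ 0}

/-- `Ω_C = S^{n-1} ∩ int C`. -/
def omegaC (n : ℕ) (C : Set (En n)) : Set (En n) := Metric.sphere 0 1 ∩ interior C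

/-- `Ω_{C°} = S^{n-1} ∩ int C°`. -/
def omegaDual (n : ℕ) (C : Set (En n)) : Set (En n) :=
  Metric.sphere 0 1 ∩ interior (dualCone n C)

/-- A pseudo-cone: nonempty closed convex set not containing `0` with `λK ⊆ K` for `λ ≥ 1`. -/
def IsPseudoCone (n : ℕ) (K : Set (En n)) : Prop :=
  K.Nonempty ∧ IsClosed K ∧ Convex ℝ K ∧ (0 : En n) ∉ K ∧ ∀ l : ℝ, 1 ≤ l → l • K ⊆ K

/-- The recession cone of `K`. -/
def recCone (n : ℕ) (K : Set (En n)) : Set (En n) :=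
  {z | ∀ x ∈ K, ∀ t : ℝ, 0 ≤ t → x + t • z ∈ K}

/-- A `C`-pseudo-cone: a pseudo-cone with recession cone `C`. -/
def IsCPseudoCone (n : ℕ) (C K : Set (En n)) : Prop := IsPseudoCone n K ∧ recCone n K = C

/-- The set of outer unit normal vectors of `K` at `x`. -/
def normalsAt (n : ℕ) (K : Set (En n)) (x : En n) : Set (En n) :=
  {u | ‖u‖ = 1 ∧ ∀ y ∈ K, ⟪y, u⟫ ≤ ⟪x, u⟫}

/-- `ν_K^{-1}(ω)`: the boundary points of `K` whose outer unit normal is unique and lies in `ω`. -/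
def nuInv (n : ℕ) (K ω : Set (En n)) : Set (En n) :=
  {x | x ∈ frontier K ∧ ∃ u ∈ ω, normalsAt n K x = {u}}

open Classical in
/-- The outer unit normal map `ν_K` (junk value `0` where the normal is not unique). -/
def nuMap (n : ℕ) (K : Set (En n)) (x : En n) : En n :=
  if h : ∃ u, normalsAt n K x = {u} then h.choose else 0

/-- `Δ(ω)`: the spherical (angular) distance of `ω` from the boundary of `Ω_{C°}`
(the relative boundary of `Ω_{C°}` in the unit sphere is `closure Ω_{C°} \ Ω_{C°}`,
since `Ω_{C°}` is relatively open in the sphere). -/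
def sphereAngleDist (n : ℕ) (C ω : Set (En n)) : ℝ :=
  sInf {d | ∃ u ∈ ω, ∃ v ∈ closure (omegaDual n C) \ omegaDual n C,
    d = InnerProductGeometry.angle u v}

/-- `b(K)`: the distance of `K` from the origin. -/
def distOrigin (n : ℕ) (K : Set (En n)) : ℝ := Metric.infDist 0 K

/-- `C^-(t) = C ∩ H^-(𝔳, t)`. -/
def Cminus (n : ℕ) (C : Set (En n)) (v : En n) (t : ℝ) : Set (En n) :=
  C ∩ {x | ⟪x, v⟫ ≤ t}

/-- The support function `h_K(u) = sup{⟨y,u⟩ : y ∈ K}`. -/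
def suppFn (n : ℕ) (K : Set (En n)) (u : En n) : ℝ := sSup ((fun y => ⟪y, u⟫) '' K)

/-- `Θ : C∖{0} → (0,∞)` continuous and homogeneous of degree `-q`. -/
def IsThetaWeight (n : ℕ) (C : Set (En n)) (q : ℝ) (Θ : En n → ℝ) : Prop :=
  ContinuousOn Θ (C \ {0}) ∧ (∀ y ∈ C \ {0}, 0 < Θ y) ∧
    ∀ y ∈ C \ {0}, ∀ r : ℝ, 0 < r → Θ (r • y) = r ^ (-q) * Θ y

/-- The `Θ`-weighted `n`-dimensional Hausdorff (Lebesgue) measure `H_Θ^n`. -/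
def HTheta (n : ℕ) (Θ : En n → ℝ) : Measure (En n) :=
  volume.withDensity fun y => ENNReal.ofReal (Θ y)

/-- The `Θ`-weighted cone-volume measure `V_K^Θ(ω) = H_Θ^n(⋃_{x ∈ ν_K^{-1}(ω)} [0,x])`. -/
def coneVol (n : ℕ) (Θ : En n → ℝ) (K ω : Set (En n)) : ℝ≥0∞ :=
  HTheta n Θ (⋃ x ∈ nuInv n K ω, segment ℝ (0 : En n) x)

/-- The (unweighted) cone-volume measure `V_K(ω) = H^n(⋃_{x ∈ ν_K^{-1}(ω)} [0,x])`. -/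
def coneVolU (n : ℕ) (K ω : Set (En n)) : ℝ≥0∞ :=
  volume (⋃ x ∈ nuInv n K ω, segment ℝ (0 : En n) x)

/-- The `Θ`-weighted surface area measure `S_{n-1}^Θ(K,ω) = ∫_{ν_K^{-1}(ω)} Θ dH^{n-1}`. -/
def surfTheta (n : ℕ) (Θ : En n → ℝ) (K ω : Set (En n)) : ℝ≥0∞ :=
  ∫⁻ x in nuInv n K ω, ENNReal.ofReal (Θ x) ∂(μH[(n : ℝ) - 1])

/-- `K ∈ K(C,ϖ)`: `K` is a `C`-pseudo-cone that is `C`-determined by `ϖ`. -/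
def CDetermined (n : ℕ) (C ϖ K : Set (En n)) : Prop :=
  IsCPseudoCone n C K ∧ K = C ∩ ⋂ u ∈ ϖ, {x | ⟪x, u⟫ ≤ suppFn n K u}

/-- The Wulff shape `[g] = C ∩ ⋂_{u ∈ ϖ} {y : ⟨y,u⟩ ≤ -g(u)}`. -/
def wulff (n : ℕ) (C ϖ : Set (En n)) (g : En n → ℝ) : Set (En n) :=
  C ∩ ⋂ u ∈ ϖ, {y | ⟪y, u⟫ ≤ -g u}

/-- The `Θ`-weighted covolume `V_Θ(K) = ∫_{C∖K} Θ dH^n`. -/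
def covol (n : ℕ) (Θ : En n → ℝ) (C K : Set (En n)) : ℝ≥0∞ := HTheta n Θ (C \ K)

/-- The radial function `ρ_K(v) = min{λ : λv ∈ K}`. -/
def rho (n : ℕ) (K : Set (En n)) (v : En n) : ℝ := sInf {t : ℝ | t • v ∈ K}

/-- The radial map `r_K(v) = ρ_K(v) v`. -/
def radMap (n : ℕ) (K : Set (En n)) (v : En n) : En n := rho n K v • v

/-- `α_K^{-1}(ω)`: directions `v ∈ Ω_C` with `r_K(v) ∈ ∂'K` (boundary point in `int C` with
unique outer normal) whose unique outer normal lies in `ω`. -/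
def alphaInv (n : ℕ) (C K ω : Set (En n)) : Set (En n) :=
  {v ∈ omegaC n C | radMap n K v ∈ frontier K ∧ radMap n K v ∈ interior C ∧
    ∃ u ∈ ω, normalsAt n K (radMap n K v) = {u}}

/-- `μ` is the Borel measure on `Ω_{C°}` representing the `Θ`-weighted cone-volume
measure of `K` (extended by `0` outside `Ω_{C°}`). -/
def RepsConeVol (n : ℕ) (C : Set (En n)) (Θ : En n → ℝ) (K : Set (En n))
    (μ : Measure (En n)) : Prop :=
  μ (omegaDual n C)ᶜ = 0 ∧
    ∀ ω, MeasurableSet ω → ω ⊆ omegaDual n C → μ ω = coneVol n Θ K ω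

/-- `μ` is the Borel measure on `Ω_{C°}` representing the `Θ`-weighted surface area
measure of `K` (extended by `0` outside `Ω_{C°}`). -/
def RepsSurf (n : ℕ) (C : Set (En n)) (Θ : En n → ℝ) (K : Set (En n))
    (μ : Measure (En n)) : Prop :=
  μ (omegaDual n C)ᶜ = 0 ∧
    ∀ ω, MeasurableSet ω → ω ⊆ omegaDual n C → μ ω = surfTheta n Θ K ω


/-! ### The concave function `g_P(y) = min_{p ∈ P} ⟨y,p⟩` -/

def gP (n : ℕ) (P : Set (En n)) (y : En n) : ℝ := sInf ((fun p => ⟪y, p⟫) '' P)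

/-- The polyhedral-type data describing a `C`-determined set. -/
def GoodP (n : ℕ) (ϖ P : Set (En n)) : Prop :=
  IsCompact P ∧ P.Nonempty ∧ ∀ p ∈ P, ∃ u ∈ ϖ, ∃ s : ℝ, 0 < s ∧ p = -(s • u)

lemma cone_bound (n : ℕ) (C ϖ : Set (En n)) (hϖc : IsCompact ϖ)
    (hϖsub : ϖ ⊆ interior (dualCone n C)) :
    ∃ c > (0 : ℝ), ∀ u ∈ ϖ, ∀ y ∈ C, ⟪y, u⟫ ≤ -(c * ‖y‖) := by
  obtain ⟨δ, hδ, h⟩ := hϖc.exists_cthickening_subset_open isOpen_interior hϖsub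
  refine ⟨δ, hδ, fun u hu y hy => ?_⟩
  rcases eq_or_ne y 0 with rfl | hy0
  · simp
  have hn : 0 < ‖y‖ := norm_pos_iff.2 hy0
  have hmem : u + (δ / ‖y‖) • y ∈ dualCone n C := by
    apply interior_subset
    apply h
    apply Metric.mem_cthickening_of_dist_le _ u _ _ hu
    rw [dist_eq_norm, add_sub_cancel_left, norm_smul, Real.norm_eq_abs,
      abs_of_pos (by positivity)]
    field_simp
    exact le_refl _
  have := hmem y hy
  rw [inner_add_left, real_inner_smul_left, real_inner_self_eq_norm_sq] at this
  rw [real_inner_comm]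
  have e : δ / ‖y‖ * ‖y‖ ^ 2 = δ * ‖y‖ := by field_simp
  linarith

lemma gP_exists {n : ℕ} {P : Set (En n)} (hc : IsCompact P) (hne : P.Nonempty) (y : En n) :
    ∃ p ∈ P, gP n P y = ⟪y, p⟫ := by
  obtain ⟨p, hp, hmin⟩ := hc.exists_isMinOn hne
    (f := fun p => ⟪y, p⟫) (by fun_prop)
  refine ⟨p, hp, ?_⟩
  apply IsLeast.csInf_eq
  refine ⟨⟨p, hp, rfl⟩, ?_⟩
  rintro _ ⟨q, hq, rfl⟩
  exact hmin hq

lemma gP_le {n : ℕ} {P : Set (En n)} (hc : IsCompact P) (y : En n) {p : En n} (hp : p ∈ P) :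
    gP n P y ≤ ⟪y, p⟫ := by
  apply csInf_le
  · exact (hc.image (f := fun p => ⟪y, p⟫) (by fun_prop)).bddBelow
  · exact ⟨p, hp, rfl⟩

lemma le_gP_iff {n : ℕ} {P : Set (En n)} (hc : IsCompact P) (hne : P.Nonempty) (y : En n)
    (a : ℝ) : a ≤ gP n P y ↔ ∀ p ∈ P, a ≤ ⟪y, p⟫ := by
  constructor
  · intro h p hp
    exact h.trans (gP_le hc y hp)
  · intro h
    obtain ⟨p, hp, he⟩ := gP_exists hc hne y
    rw [he]; exact h p hp

lemma gP_smul {n : ℕ} {P : Set (En n)} (hc : IsCompact P) (hne : P.Nonempty) (y : En n)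
    {s : ℝ} (hs : 0 ≤ s) : gP n P (s • y) = s * gP n P y := by
  apply le_antisymm
  · obtain ⟨p, hp, he⟩ := gP_exists hc hne y
    rw [he, ← real_inner_smul_left]
    exact gP_le hc _ hp
  · rw [le_gP_iff hc hne]
    intro p hp
    rw [real_inner_smul_left]
    exact mul_le_mul_of_nonneg_left (gP_le hc y hp) hs

lemma gP_lip {n : ℕ} {P : Set (En n)} (hc : IsCompact P) (hne : P.Nonempty) :
    ∃ B : ℝ≥0, LipschitzWith B (gP n P) := by
  obtain ⟨B, hB⟩ := hc.isBounded.exists_norm_le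
  refine ⟨B.toNNReal, LipschitzWith.of_le_add_mul' B fun x y => ?_⟩
  obtain ⟨p, hp, he⟩ := gP_exists hc hne y
  have h1 := gP_le hc x hp
  have h2 : ⟪x, p⟫ = ⟪y, p⟫ + ⟪x - y, p⟫ := by rw [← inner_add_left]; congr 1; abel
  have h3 := real_inner_le_norm (x - y) p
  have h4 : ‖x - y‖ * ‖p‖ ≤ B * dist x y := by
    rw [dist_eq_norm, mul_comm]
    exact mul_le_mul_of_nonneg_right (hB p hp) (norm_nonneg _)
  linarith

lemma gP_cont {n : ℕ} {P : Set (En n)} (hc : IsCompact P) (hne : P.Nonempty) :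
    Continuous (gP n P) := by
  obtain ⟨B, hB⟩ := gP_lip hc hne
  exact hB.continuous

lemma gP_ae_diff {n : ℕ} {P : Set (En n)} (hc : IsCompact P) (hne : P.Nonempty) :
    ∀ᵐ y ∂(volume : Measure (En n)), DifferentiableAt ℝ (gP n P) y := by
  obtain ⟨B, hB⟩ := gP_lip hc hne
  exact hB.ae_differentiableAt

lemma gP_gradient {n : ℕ} {P : Set (En n)} (hc : IsCompact P)
    {y p : En n} (hd : DifferentiableAt ℝ (gP n P) y) (hp : p ∈ P) (he : gP n P y = ⟪y, p⟫) :
    gradient (gP n P) y = p := by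
  have hg := hd.hasGradientAt.hasFDerivAt
  have h1 : HasFDerivAt (fun z => ⟪p, z⟫ - gP n P z)
      (innerSL ℝ p - (InnerProductSpace.toDual ℝ (En n)) (gradient (gP n P) y)) y :=
    ((innerSL ℝ p).hasFDerivAt).sub hg
  have h2 : IsLocalMin (fun z => ⟪p, z⟫ - gP n P z) y := by
    apply Filter.Eventually.of_forall
    intro z
    have := gP_le hc z hp
    simp only [he, real_inner_comm y p, sub_self]
    rw [real_inner_comm] at this
    linarith
  have h3 := h2.hasFDerivAt_eq_zero h1
  have h4 : ∀ z, ⟪p, z⟫ = ⟪gradient (gP n P) y, z⟫ := fun z => by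
    have : ⟪p, z⟫ - ⟪gradient (gP n P) y, z⟫ = 0 := congrArg (fun L => L z) h3
    linarith
  exact (ext_inner_right ℝ h4).symm

/-- the normal direction -/
def alph (n : ℕ) (P : Set (En n)) (y : En n) : En n :=
  -(‖gradient (gP n P) y‖⁻¹ • gradient (gP n P) y)

lemma alph_measurable (n : ℕ) (P : Set (En n)) : Measurable (alph n P) := by
  have h : Measurable (gradient (gP n P)) := by
    unfold gradient
    exact ((InnerProductSpace.toDual ℝ (En n)).symm.continuous.measurable).comp
      (measurable_fderiv ℝ (gP n P))
  unfold alph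
  fun_prop

lemma alph_mem {n : ℕ} {ϖ P : Set (En n)} (hP : GoodP n ϖ P) (h1 : ∀ u ∈ ϖ, ‖u‖ = 1)
    {y : En n} (hd : DifferentiableAt ℝ (gP n P) y) : alph n P y ∈ ϖ := by
  obtain ⟨p, hp, he⟩ := gP_exists hP.1 hP.2.1 y
  obtain ⟨u, hu, s, hs, rfl⟩ := hP.2.2 p hp
  unfold alph
  rw [gP_gradient hP.1 hd hp he, norm_neg, norm_smul, h1 u hu, Real.norm_eq_abs, abs_of_pos hs,
    smul_neg, neg_neg, smul_smul, mul_one, inv_mul_cancel₀ hs.ne', one_smul]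
  exact hu

lemma exists_P (n : ℕ) (C ϖ K : Set (En n)) (hϖc : IsCompact ϖ)
    (hϖne : ϖ.Nonempty) (hϖsub : ϖ ⊆ omegaDual n C) (hK : CDetermined n C ϖ K) :
    ∃ P, GoodP n ϖ P ∧ K = C ∩ {x | 1 ≤ gP n P x} := by
  obtain ⟨⟨⟨⟨x0, hx0⟩, hcl, hconv, h0, -⟩, -⟩, hdet⟩ := hK
  have hKC : K ⊆ C := by rw [hdet]; exact inter_subset_left
  obtain ⟨c, hc, hb⟩ := cone_bound n C ϖ hϖc (fun u hu => (hϖsub hu).2)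
  have hu1 : ∀ u ∈ ϖ, ‖u‖ = 1 := fun u hu => by simpa using (hϖsub hu).1
  obtain ⟨d, hd, hdK⟩ : ∃ d > (0 : ℝ), ∀ y ∈ K, d ≤ ‖y‖ := by
    obtain ⟨d, hd, h⟩ := Metric.isOpen_iff.1 hcl.isOpen_compl 0 h0
    refine ⟨d, hd, fun y hy => ?_⟩
    by_contra hlt
    push Not at hlt
    exact h (by simpa using hlt) hy
  have hbdd : ∀ u ∈ ϖ, BddAbove ((fun y => ⟪y, u⟫) '' K) := fun u hu => by
    refine ⟨0, ?_⟩
    rintro _ ⟨y, hy, rfl⟩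
    have := hb u hu y (hKC hy)
    have : 0 ≤ c * ‖y‖ := by positivity
    simp only
    linarith
  have hneg : ∀ u ∈ ϖ, suppFn n K u < 0 := fun u hu => by
    have : suppFn n K u ≤ -(c * d) := by
      apply csSup_le (Set.Nonempty.image _ ⟨x0, hx0⟩)
      rintro _ ⟨y, hy, rfl⟩
      have h1 := hb u hu y (hKC hy)
      have h2 := mul_le_mul_of_nonneg_left (hdK y hy) hc.le
      simp only
      linarith
    have := mul_pos hc hd
    linarith
  have hle : ∀ u ∈ ϖ, ∀ y ∈ K, ⟪y, u⟫ ≤ suppFn n K u := fun u hu y hy =>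
    le_csSup (hbdd u hu) ⟨y, hy, rfl⟩
  have hcont : ContinuousOn (suppFn n K) ϖ := by
    have : LipschitzOnWith (‖x0‖ / c).toNNReal (suppFn n K) ϖ := by
      apply LipschitzOnWith.of_le_add_mul'
      intro u hu w hw
      apply csSup_le (Set.Nonempty.image _ ⟨x0, hx0⟩)
      rintro _ ⟨y, hy, rfl⟩
      simp only
      rcases le_or_gt ‖y‖ (‖x0‖ / c) with h | h
      · have h1 := hle w hw y hy
        have h2 : ⟪y, u⟫ = ⟪y, w⟫ + ⟪y, u - w⟫ := by rw [← inner_add_right]; congr 1; abel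
        have h3 := real_inner_le_norm y (u - w)
        have h4 : ‖y‖ * ‖u - w‖ ≤ ‖x0‖ / c * dist u w := by
          rw [dist_eq_norm]
          exact mul_le_mul_of_nonneg_right h (norm_nonneg _)
        linarith
      · have h1 := hb u hu y (hKC hy)
        have h2 := hle w hw x0 hx0
        have h3 := neg_le_of_abs_le (abs_real_inner_le_norm x0 w)
        rw [hu1 w hw, mul_one] at h3
        rw [div_lt_iff₀ hc] at h
        have : 0 ≤ ‖x0‖ / c * dist u w := by positivity
        nlinarith
    exact this.continuousOn
  have hPc : IsCompact ((fun u => (suppFn n K u)⁻¹ • u) '' ϖ) := by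
    apply hϖc.image_of_continuousOn
    exact (hcont.inv₀ (fun u hu => (hneg u hu).ne)).smul continuousOn_id
  refine ⟨(fun u => (suppFn n K u)⁻¹ • u) '' ϖ, ⟨hPc, hϖne.image _, ?_⟩, ?_⟩
  · rintro _ ⟨u, hu, rfl⟩
    refine ⟨u, hu, -(suppFn n K u)⁻¹, ?_, by simp⟩
    have := inv_lt_zero.2 (hneg u hu)
    linarith
  · conv_lhs => rw [hdet]
    ext x
    simp only [mem_inter_iff, mem_iInter, mem_ofPred_eq, le_gP_iff hPc (hϖne.image _),
      forall_mem_image]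
    refine and_congr_right fun _ => forall₂_congr fun u hu => ?_
    rw [real_inner_smul_right, inv_mul_eq_div, one_le_div_of_neg (hneg u hu)]

lemma normals_eq {n : ℕ} {C P K : Set (En n)} (hC : ∀ x ∈ C, ∀ r : ℝ, 0 ≤ r → r • x ∈ C)
    (hc : IsCompact P) (hne : P.Nonempty) (hKP : K = C ∩ {x | 1 ≤ gP n P x}) {y : En n}
    (hy : y ∈ interior C) (hpos : 0 < gP n P y) (hd : DifferentiableAt ℝ (gP n P) y) :
    normalsAt n K ((gP n P y)⁻¹ • y) = {alph n P y} := by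
  obtain ⟨p, hp, he⟩ := gP_exists hc hne y
  have hgr := gP_gradient hc hd hp he
  have halph : alph n P y = -(‖p‖⁻¹ • p) := by rw [alph, hgr]
  have hp0 : p ≠ 0 := by
    rintro rfl
    simp at he
    linarith
  have hpn : 0 < ‖p‖ := norm_pos_iff.2 hp0
  set x := (gP n P y)⁻¹ • y with hx
  have hxp : ⟪x, p⟫ = 1 := by
    rw [hx, real_inner_smul_left, ← he, inv_mul_cancel₀ hpos.ne']
  have hyx : y = gP n P y • x := by rw [hx, smul_smul, mul_inv_cancel₀ hpos.ne', one_smul]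
  have hmemK : ∀ z ∈ C, 0 < gP n P z → (gP n P z)⁻¹ • z ∈ K := by
    intro z hz hgz
    rw [hKP]
    refine ⟨hC z hz _ (by positivity), ?_⟩
    show 1 ≤ gP n P _
    rw [gP_smul hc hne _ (by positivity), inv_mul_cancel₀ hgz.ne']
  have hxK : x ∈ K := hmemK y (interior_subset hy) hpos
  rw [halph]
  ext w
  simp only [mem_singleton_iff]
  constructor
  · rintro ⟨hw1, hw⟩
    have hx2 : (2 : ℝ) • x ∈ K := by
      have hxK' := hxK
      rw [hKP] at hxK' ⊢
      refine ⟨hC x hxK'.1 _ (by norm_num), ?_⟩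
      show 1 ≤ gP n P _
      rw [gP_smul hc hne _ (by norm_num)]
      have : 1 ≤ gP n P x := hxK'.2
      linarith
    have hneg : ⟪x, w⟫ ≤ 0 := by
      have := hw _ hx2
      rw [real_inner_smul_left] at this
      linarith
    have h1 : HasFDerivAt (fun z => ⟪x, w⟫ • gP n P z - ⟪w, z⟫)
        (⟪x, w⟫ • (InnerProductSpace.toDual ℝ (En n)) p - innerSL ℝ w) y := by
      have hg := hd.hasGradientAt.hasFDerivAt
      rw [hgr] at hg
      exact (hg.const_smul ⟪x, w⟫).sub ((innerSL ℝ w).hasFDerivAt)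
    have h2 : IsLocalMin (fun z => ⟪x, w⟫ • gP n P z - ⟪w, z⟫) y := by
      have e1 : ∀ᶠ z in 𝓝 y, 0 < gP n P z :=
        (gP_cont hc hne).continuousAt.eventually_const_lt hpos
      have e2 : ∀ᶠ z in 𝓝 y, z ∈ interior C := isOpen_interior.mem_nhds hy
      filter_upwards [e1, e2] with z hz1 hz2
      have h3 := hw _ (hmemK z (interior_subset hz2) hz1)
      rw [real_inner_smul_left, inv_mul_le_iff₀ hz1, real_inner_comm w z] at h3
      have h4 : ⟪w, y⟫ = gP n P y * ⟪x, w⟫ := by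
        conv_lhs => rw [hyx]
        rw [real_inner_smul_right, real_inner_comm]
      simp only [smul_eq_mul, h4]
      nlinarith
    have h3 := h2.hasFDerivAt_eq_zero h1
    have h4 : ∀ z, ⟪⟪x, w⟫ • p, z⟫ = ⟪w, z⟫ := fun z => by
      have : ⟪x, w⟫ * ⟪p, z⟫ - ⟪w, z⟫ = 0 := congrArg (fun L => L z) h3
      rw [real_inner_smul_left]
      linarith
    have h5 : ⟪x, w⟫ • p = w := ext_inner_right ℝ h4
    have h6 : -⟪x, w⟫ * ‖p‖ = 1 := by
      rw [← abs_of_nonpos hneg, ← Real.norm_eq_abs, ← norm_smul, h5, hw1]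
    have h7 : ⟪x, w⟫ = -‖p‖⁻¹ := by
      field_simp
      linarith
    rw [← h5, h7, neg_smul]
  · rintro rfl
    refine ⟨?_, ?_⟩
    · rw [norm_neg, norm_smul, norm_inv, norm_norm, inv_mul_cancel₀ hpn.ne']
    · intro z hz
      rw [hKP] at hz
      have : 1 ≤ ⟪z, p⟫ := le_trans hz.2 (gP_le hc z hp)
      rw [inner_neg_right, inner_neg_right, real_inner_smul_right, real_inner_smul_right, hxp]
      have : 0 < ‖p‖⁻¹ := by positivity
      nlinarith

lemma mem_frontier_of_one {n : ℕ} {C P K : Set (En n)}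
    (hc : IsCompact P) (hne : P.Nonempty) (hKP : K = C ∩ {x | 1 ≤ gP n P x}) {x : En n}
    (hx : x ∈ C) (h1 : gP n P x = 1) : x ∈ frontier K := by
  have hxK : x ∈ K := by rw [hKP]; exact ⟨hx, h1.ge⟩
  refine ⟨subset_closure hxK, fun hIntg => ?_⟩
  have ht : Tendsto (fun s : ℝ => s • x) (𝓝[<] 1) (𝓝 x) := by
    have : Tendsto (fun s : ℝ => s • x) (𝓝 1) (𝓝 ((1 : ℝ) • x)) :=
      (continuous_id.smul continuous_const).tendsto 1
    rw [one_smul] at this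
    exact this.mono_left nhdsWithin_le_nhds
  have e1 : ∀ᶠ s in 𝓝[<] (1 : ℝ), s • x ∈ K := ht (mem_interior_iff_mem_nhds.1 hIntg)
  have e2 : ∀ᶠ s in 𝓝[<] (1 : ℝ), s ∈ Ioo (0 : ℝ) 1 := Ioo_mem_nhdsLT (by norm_num)
  obtain ⟨s, hs, hs0, hs1⟩ := (e1.and e2).exists
  rw [hKP] at hs
  have : 1 ≤ gP n P (s • x) := hs.2
  rw [gP_smul hc hne _ hs0.le, h1] at this
  linarith

def Eset (n : ℕ) (C P : Set (En n)) : Set (En n) :=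
  interior C ∩ {y | 0 < gP n P y ∧ gP n P y ≤ 1}

lemma Eset_meas {n : ℕ} {C P : Set (En n)} (hc : IsCompact P) (hne : P.Nonempty) :
    MeasurableSet (Eset n C P) := by
  have h := (gP_cont hc hne).measurable
  exact isOpen_interior.measurableSet.inter
    ((measurableSet_lt measurable_const h).inter (measurableSet_le h measurable_const))

lemma HTheta_ac (n : ℕ) (Θ : En n → ℝ) : HTheta n Θ ≪ volume :=
  withDensity_absolutelyContinuous _ _

lemma rep_set {n : ℕ} (hn : 2 ≤ n) {C P K : Set (En n)} (hCc : IsClosed C) (hCv : Convex ℝ C)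
    (hC : ∀ x ∈ C, ∀ r : ℝ, 0 ≤ r → r • x ∈ C) (hKc : IsClosed K)
    (hc : IsCompact P) (hne : P.Nonempty) (hKP : K = C ∩ {x | 1 ≤ gP n P x}) (ω : Set (En n)) :
    (⋃ x ∈ nuInv n K ω, segment ℝ (0 : En n) x) =ᵐ[(volume : Measure (En n))]
      (alph n P ⁻¹' ω ∩ Eset n C P : Set (En n)) := by
  have : Nonempty (Fin n) := ⟨⟨0, by omega⟩⟩
  have a0 : ∀ᵐ y ∂(volume : Measure (En n)), y ≠ 0 := by
    apply compl_mem_ae_iff.2 (measure_singleton (0 : En n))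
  have a1 : ∀ᵐ y ∂(volume : Measure (En n)), y ∉ frontier C :=
    compl_mem_ae_iff.2 (hCv.addHaar_frontier _)
  apply eventuallyEq_set.2
  filter_upwards [a0, a1, gP_ae_diff hc hne] with y hy0 hyf hd
  simp only [mem_iUnion, exists_prop]
  constructor
  · rintro ⟨x, ⟨hxf, u, hu, hnu⟩, hseg⟩
    rw [segment_eq_image] at hseg
    obtain ⟨s, ⟨hs0, hs1⟩, hs⟩ := hseg
    simp only [smul_zero, zero_add] at hs
    have hspos : 0 < s := by
      rcases hs0.eq_or_lt with h | h
      · exfalso; apply hy0; rw [← hs, ← h, zero_smul]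
      · exact h
    have hxK : x ∈ K := hKc.frontier_subset hxf
    have hxK' := hxK
    rw [hKP] at hxK'
    have hyC : y ∈ C := hs ▸ hC x hxK'.1 s hs0
    have hyi : y ∈ interior C := by
      by_contra h
      exact hyf ⟨subset_closure hyC, h⟩
    have hxi : x ∈ interior C := by
      rw [mem_interior]
      refine ⟨(fun z : En n => s • z) ⁻¹' interior C, ?_,
        isOpen_interior.preimage (continuous_const_smul s), ?_⟩
      · intro z hz
        have := hC _ (interior_subset hz) s⁻¹ (by positivity)
        simpa [smul_smul, inv_mul_cancel₀ hspos.ne'] using this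
      · show s • x ∈ interior C
        rw [hs]; exact hyi
    have hgx : gP n P x = 1 := by
      apply le_antisymm _ hxK'.2
      by_contra hlt
      push Not at hlt
      apply hxf.2
      rw [mem_interior]
      refine ⟨interior C ∩ {z | 1 < gP n P z}, ?_,
        isOpen_interior.inter (isOpen_lt continuous_const (gP_cont hc hne)), hxi, hlt⟩
      rintro z ⟨hz1, hz2⟩
      rw [hKP]
      have hz3 : 1 < gP n P z := hz2
      exact ⟨interior_subset hz1, hz3.le⟩
    have hgy : gP n P y = s := by rw [← hs, gP_smul hc hne _ hs0, hgx, mul_one]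
    have hxy : (gP n P y)⁻¹ • y = x := by
      rw [hgy, ← hs, smul_smul, inv_mul_cancel₀ hspos.ne', one_smul]
    have hN := normals_eq hC hc hne hKP hyi (by rw [hgy]; exact hspos) hd
    rw [hxy, hnu] at hN
    refine ⟨?_, hyi, by rw [mem_ofPred_eq, hgy]; exact ⟨hspos, hs1⟩⟩
    show alph n P y ∈ ω
    rw [← singleton_injective hN]
    exact hu
  · rintro ⟨hω, hyi, hg0, hg1⟩
    refine ⟨(gP n P y)⁻¹ • y, ⟨?_, alph n P y, hω, normals_eq hC hc hne hKP hyi hg0 hd⟩, ?_⟩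
    · apply mem_frontier_of_one hc hne hKP (hC _ (interior_subset hyi) _ (by positivity))
      rw [gP_smul hc hne _ (by positivity), inv_mul_cancel₀ hg0.ne']
    · rw [segment_eq_image]
      refine ⟨gP n P y, ⟨hg0.le, hg1⟩, ?_⟩
      simp [smul_smul, mul_inv_cancel₀ hg0.ne']

lemma rep_measure {n : ℕ} (hn : 2 ≤ n) {C ϖ P K : Set (En n)} (hCc : IsClosed C)
    (hCv : Convex ℝ C)
    (hC : ∀ x ∈ C, ∀ r : ℝ, 0 ≤ r → r • x ∈ C) (hKc : IsClosed K)
    (hϖsub : ϖ ⊆ omegaDual n C)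
    (hP : GoodP n ϖ P) (hKP : K = C ∩ {x | 1 ≤ gP n P x}) (Θ : En n → ℝ) (μ : Measure (En n))
    (hμ : RepsConeVol n C Θ K μ) :
    μ = ((HTheta n Θ).restrict (Eset n C P)).map (alph n P) := by
  have hΩ : MeasurableSet (omegaDual n C) :=
    Metric.isClosed_sphere.measurableSet.inter isOpen_interior.measurableSet
  have hm := alph_measurable n P
  ext A hA
  have e1 : μ A = μ (A ∩ omegaDual n C) := by
    apply le_antisymm _ (measure_mono inter_subset_left)
    calc μ A ≤ μ (A ∩ omegaDual n C ∪ (omegaDual n C)ᶜ) := by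
          apply measure_mono
          intro x hx
          by_cases h : x ∈ omegaDual n C
          · exact Or.inl ⟨hx, h⟩
          · exact Or.inr h
      _ ≤ _ := measure_union_le _ _
      _ = _ := by rw [hμ.1, add_zero]
  rw [e1, hμ.2 _ (hA.inter hΩ) inter_subset_right, Measure.map_apply hm hA,
    Measure.restrict_apply (hm hA), coneVol]
  apply measure_congr
  apply (HTheta_ac n Θ).ae_le
  refine (rep_set hn hCc hCv hC hKc hP.1 hP.2.1 hKP _).trans ?_
  apply eventuallyEq_set.2
  filter_upwards [gP_ae_diff hP.1 hP.2.1] with y hd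
  have hmem : alph n P y ∈ omegaDual n C := hϖsub (alph_mem hP
    (fun u hu => by simpa using (hϖsub hu).1) hd)
  change (alph n P y ∈ A ∧ alph n P y ∈ omegaDual n C) ∧ y ∈ _ ↔ alph n P y ∈ A ∧ y ∈ _
  tauto

lemma HTheta_fin {n : ℕ} (hn : 2 ≤ n) {C : Set (En n)} (hCc : IsClosed C)
    (hC : ∀ x ∈ C, ∀ r : ℝ, 0 ≤ r → r • x ∈ C) {q : ℝ} (hq2 : q < n) {Θ : En n → ℝ}
    (hΘ : IsThetaWeight n C q Θ) {R : ℝ} (hR : 0 < R) :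
    HTheta n Θ (interior C ∩ Metric.ball 0 R) < ⊤ := by
  have hne : Nonempty (Fin n) := ⟨⟨0, by omega⟩⟩
  have hmeas : MeasurableSet (interior C ∩ Metric.ball (0 : En n) R) :=
    isOpen_interior.measurableSet.inter measurableSet_ball
  obtain ⟨hcont, hpos, hhom⟩ := hΘ
  have hcomp : IsCompact (C ∩ Metric.sphere (0 : En n) 1) :=
    (isCompact_sphere _ _).inter_left hCc
  obtain ⟨M, hM⟩ := hcomp.exists_bound_of_continuousOn (f := Θ) (hcont.mono (by
    rintro x ⟨hx1, hx2⟩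
    refine ⟨hx1, ?_⟩
    rintro rfl
    simp at hx2))
  have hbound : ∀ y ∈ C, y ≠ 0 → Θ y ≤ M * ‖y‖ ^ (-q) := by
    intro y hy hy0
    have hny : 0 < ‖y‖ := norm_pos_iff.2 hy0
    have hz : ‖y‖⁻¹ • y ∈ C := hC y hy _ (by positivity)
    have hz1 : ‖‖y‖⁻¹ • y‖ = 1 := by
      rw [norm_smul, norm_inv, norm_norm, inv_mul_cancel₀ hny.ne']
    have h1 := hhom (‖y‖⁻¹ • y) ⟨hz, by
      intro h
      rw [mem_singleton_iff] at h
      rw [h, norm_zero] at hz1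
      norm_num at hz1⟩ ‖y‖ hny
    rw [smul_smul, mul_inv_cancel₀ hny.ne', one_smul] at h1
    rw [h1, mul_comm]
    apply mul_le_mul_of_nonneg_right _ (by positivity)
    exact (le_abs_self _).trans (hM _ ⟨hz, by simpa using hz1⟩)
  have hIntg : IntegrableOn (fun x : En n => M * ‖x‖ ^ (-q)) (Metric.ball 0 R) volume := by
    rw [integrableOn_fun_norm_addHaar volume (f := fun r : ℝ => M * r ^ (-q))]
    have h1 : IntegrableOn (fun r : ℝ => M * r ^ ((n : ℝ) - 1 - q)) (Ioo 0 R) := by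
      apply Integrable.const_mul
      exact (intervalIntegral.integrableOn_Ioo_rpow_iff hR).2 (by linarith)
    refine h1.congr_fun ?_ measurableSet_Ioo
    intro r hr
    have hr0 : 0 < r := hr.1
    simp only [finrank_euclideanSpace, Fintype.card_fin, smul_eq_mul]
    rw [← Real.rpow_natCast r (n - 1), Nat.cast_sub (by omega), sub_eq_add_neg _ q,
      Real.rpow_add hr0]
    push_cast
    ring
  rw [HTheta, withDensity_apply _ hmeas]
  calc ∫⁻ y in interior C ∩ Metric.ball 0 R, ENNReal.ofReal (Θ y)
      ≤ ∫⁻ y in interior C ∩ Metric.ball 0 R, ENNReal.ofReal (M * ‖y‖ ^ (-q)) := by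
        apply setLIntegral_mono_ae' hmeas
        have a0 : ∀ᵐ y ∂(volume : Measure (En n)), y ≠ 0 :=
          compl_mem_ae_iff.2 (measure_singleton (0 : En n))
        filter_upwards [a0] with y hy0 hy
        exact ENNReal.ofReal_le_ofReal (hbound y (interior_subset hy.1) hy0)
    _ ≤ ∫⁻ y in Metric.ball 0 R, ENNReal.ofReal (M * ‖y‖ ^ (-q)) :=
        lintegral_mono_set inter_subset_right
    _ < ⊤ := hIntg.lintegral_lt_top

lemma grad_tendsto {n : ℕ} {P : ℕ → Set (En n)} {P₀ U : Set (En n)}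
    (hP : ∀ j, IsCompact (P j) ∧ (P j).Nonempty)
    (hU : IsOpen U) (hlim : ∀ z ∈ U, Tendsto (fun j => gP n (P j) z) atTop (𝓝 (gP n P₀ z)))
    {y : En n} (hy : y ∈ U) (hd : ∀ j, DifferentiableAt ℝ (gP n (P j)) y)
    (hd₀ : DifferentiableAt ℝ (gP n P₀) y) :
    Tendsto (fun j => gradient (gP n (P j)) y) atTop (𝓝 (gradient (gP n P₀) y)) := by
  have lower : ∀ e : En n, ∀ a < ⟪gradient (gP n P₀) y, e⟫,
      ∀ᶠ j in atTop, a < ⟪gradient (gP n (P j)) y, e⟫ := by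
    intro e a ha
    have hder : HasDerivAt (fun t : ℝ => gP n P₀ (y + t • e)) ⟪gradient (gP n P₀) y, e⟫ 0 := by
      have h1 : HasDerivAt (fun t : ℝ => y + t • e) e 0 := by
        simpa using ((hasDerivAt_id (0 : ℝ)).smul_const e).const_add y
      have h2 : HasFDerivAt (gP n P₀)
          ((InnerProductSpace.toDual ℝ (En n)) (gradient (gP n P₀) y)) (y + (0 : ℝ) • e) := by
        rw [zero_smul, add_zero]
        exact hd₀.hasGradientAt.hasFDerivAt
      exact h2.comp_hasDerivAt (0 : ℝ) h1
    have hslope := hder.tendsto_slope_zero_right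
    simp only [zero_add, zero_smul, add_zero, smul_eq_mul] at hslope
    have e1 := hslope.eventually_const_lt ha
    have e2 : ∀ᶠ t : ℝ in 𝓝[>] 0, y + t • e ∈ U := by
      have hc : Continuous (fun t : ℝ => y + t • e) := by fun_prop
      have : ∀ᶠ t : ℝ in 𝓝 0, y + t • e ∈ U :=
        hc.continuousAt.eventually_mem (hU.mem_nhds (by simpa using hy))
      exact this.filter_mono nhdsWithin_le_nhds
    obtain ⟨t, ⟨ht1, ht2⟩, ht0⟩ := ((e1.and e2).and self_mem_nhdsWithin).exists
    have ht0 : 0 < t := ht0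
    have hl : Tendsto (fun j => t⁻¹ * (gP n (P j) (y + t • e) - gP n (P j) y)) atTop
        (𝓝 (t⁻¹ * (gP n P₀ (y + t • e) - gP n P₀ y))) :=
      ((hlim _ ht2).sub (hlim _ hy)).const_mul _
    filter_upwards [hl.eventually_const_lt ht1] with j hj
    refine hj.trans_le ?_
    obtain ⟨p, hp, he⟩ := gP_exists (hP j).1 (hP j).2 y
    rw [gP_gradient (hP j).1 (hd j) hp he, inv_mul_le_iff₀ ht0, he]
    have h1 := gP_le (hP j).1 (y + t • e) hp
    rw [inner_add_left, real_inner_smul_left, real_inner_comm p e] at h1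
    linarith
  have hinner : ∀ e : En n, Tendsto (fun j => ⟪gradient (gP n (P j)) y, e⟫) atTop
      (𝓝 ⟪gradient (gP n P₀) y, e⟫) := by
    intro e
    refine tendsto_order.2 ⟨lower e, fun b hb => ?_⟩
    have := lower (-e) (-b) (by rw [inner_neg_right]; linarith)
    filter_upwards [this] with j hj
    rw [inner_neg_right] at hj
    linarith
  have hrepr : ∀ x : En n, x = ∑ i, ⟪x, EuclideanSpace.basisFun (Fin n) ℝ i⟫ •
      EuclideanSpace.basisFun (Fin n) ℝ i := fun x => by
    conv_lhs => rw [← (EuclideanSpace.basisFun (Fin n) ℝ).sum_repr' x]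
    exact Finset.sum_congr rfl fun i _ => by rw [real_inner_comm]
  rw [hrepr (gradient (gP n P₀) y)]
  have : (fun j => gradient (gP n (P j)) y) = fun j =>
      ∑ i, ⟪gradient (gP n (P j)) y, EuclideanSpace.basisFun (Fin n) ℝ i⟫ •
        EuclideanSpace.basisFun (Fin n) ℝ i := funext fun j => hrepr _
  rw [this]
  exact tendsto_finsetSum _ fun i _ => (hinner _).smul_const _

lemma Cminus_bdd {n : ℕ} {C : Set (En n)} {v : En n} (hv3 : -v ∈ interior (dualCone n C))
    (t : ℝ) : ∃ R > (0 : ℝ), ∀ x ∈ Cminus n C v t, ‖x‖ ≤ R := by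
  obtain ⟨c, hc, h⟩ := cone_bound n C {-v} isCompact_singleton (by simpa using hv3)
  refine ⟨max 1 (t / c), by positivity, ?_⟩
  rintro x ⟨hx, hxt⟩
  have hxt : ⟪x, v⟫ ≤ t := hxt
  have := h (-v) rfl x hx
  rw [inner_neg_right] at this
  apply le_max_of_le_right
  rw [le_div_iff₀ hc]
  linarith

lemma g_tendsto {n : ℕ} {C ϖ : Set (En n)} {v : En n}
    (hC : ∀ x ∈ C, ∀ r : ℝ, 0 ≤ r → r • x ∈ C)
    (hv3 : -v ∈ interior (dualCone n C)) (hu1 : ∀ u ∈ ϖ, ‖u‖ = 1)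
    {K : ℕ → Set (En n)} {K₀ : Set (En n)} (hK₀c : IsClosed K₀)
    {P : ℕ → Set (En n)} {P₀ : Set (En n)}
    (hP : ∀ j, GoodP n ϖ (P j)) (hP₀ : GoodP n ϖ P₀)
    (hKP : ∀ j, K j = C ∩ {x | 1 ≤ gP n (P j) x}) (hKP₀ : K₀ = C ∩ {x | 1 ≤ gP n P₀ x})
    (hconv : ∃ t₀ > (0 : ℝ), (∀ j, (K j ∩ Cminus n C v t₀).Nonempty) ∧
      (K₀ ∩ Cminus n C v t₀).Nonempty ∧
      ∀ t > t₀, Tendsto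
        (fun j => Metric.hausdorffDist (K j ∩ Cminus n C v t) (K₀ ∩ Cminus n C v t))
        atTop (nhds 0))
    (hCc : IsClosed C) {y : En n} (hy : y ∈ interior C) (hg : 0 < gP n P₀ y) :
    Tendsto (fun j => gP n (P j) y) atTop (𝓝 (gP n P₀ y)) := by
  obtain ⟨t₀, ht₀, hne, hne₀, hlim⟩ := hconv
  have hfin : ∀ t > t₀, ∀ j,
      Metric.hausdorffEDist (K j ∩ Cminus n C v t) (K₀ ∩ Cminus n C v t) ≠ ⊤ := by
    intro t ht j
    have hsub : Cminus n C v t₀ ⊆ Cminus n C v t := fun x hx => ⟨hx.1, le_trans hx.2 ht.le⟩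
    obtain ⟨R, -, hR⟩ := Cminus_bdd hv3 t
    have hb : Bornology.IsBounded (Cminus n C v t) := isBounded_iff_forall_norm_le.2 ⟨R, hR⟩
    exact Metric.hausdorffEDist_ne_top_of_nonempty_of_bounded
      ((hne j).mono (inter_subset_inter_right _ hsub))
      (hne₀.mono (inter_subset_inter_right _ hsub))
      (hb.subset inter_subset_right) (hb.subset inter_subset_right)
  have hA : ∀ x ∈ interior K₀, ∀ᶠ j in atTop, x ∈ K j := by
    intro x hx
    obtain ⟨r, hr, hball⟩ := Metric.isOpen_iff.1 isOpen_interior x hx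
    have hxC : x ∈ C := by
      have := interior_subset hx
      rw [hKP₀] at this
      exact this.1
    have ht : max t₀ (⟪x, v⟫ + r * ‖v‖) + 1 > t₀ := by
      have := le_max_left t₀ (⟪x, v⟫ + r * ‖v‖)
      linarith
    have hev := (hlim _ ht).eventually_lt_const (show (0 : ℝ) < r / 2 by positivity)
    filter_upwards [hev] with j hj
    by_contra hxK
    have hlt : ¬ (1 ≤ gP n (P j) x) := fun h => hxK (by rw [hKP j]; exact ⟨hxC, h⟩)
    rw [le_gP_iff (hP j).1 (hP j).2.1] at hlt
    push Not at hlt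
    obtain ⟨p, hp, hp1⟩ := hlt
    obtain ⟨u, hu, s, hs, rfl⟩ := (hP j).2.2 p hp
    have hz : x + (r / 2) • u ∈ K₀ := by
      apply interior_subset
      apply hball
      rw [Metric.mem_ball, dist_eq_norm, add_sub_cancel_left, norm_smul, hu1 u hu,
        Real.norm_eq_abs, abs_of_pos (by positivity)]
      linarith
    have hzC : x + (r / 2) • u ∈ C := by
      rw [hKP₀] at hz
      exact hz.1
    have hzt : x + (r / 2) • u ∈ K₀ ∩ Cminus n C v (max t₀ (⟪x, v⟫ + r * ‖v‖) + 1) := by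
      refine ⟨hz, hzC, ?_⟩
      show ⟪x + (r / 2) • u, v⟫ ≤ _
      rw [inner_add_left, real_inner_smul_left]
      have h1 := le_max_right t₀ (⟪x, v⟫ + r * ‖v‖)
      have h2 := real_inner_le_norm u v
      rw [hu1 u hu, one_mul] at h2
      have h3 := norm_nonneg v
      nlinarith
    obtain ⟨z', hz', hdist⟩ := Metric.exists_dist_lt_of_hausdorffDist_lt' hzt hj (hfin _ ht j)
    have hz'K : z' ∈ K j := hz'.1
    rw [hKP j] at hz'K
    have h1 : 1 ≤ ⟪z', -(s • u)⟫ := le_trans hz'K.2 (gP_le (hP j).1 _ hp)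
    rw [inner_neg_right, real_inner_smul_right] at h1 hp1
    have h2 : ⟪z', u⟫ = ⟪x, u⟫ + r / 2 + ⟪z' - (x + (r / 2) • u), u⟫ := by
      rw [inner_sub_left, inner_add_left, real_inner_smul_left, real_inner_self_eq_norm_sq,
        hu1 u hu]
      ring
    have h3 := neg_le_of_abs_le (abs_real_inner_le_norm (z' - (x + (r / 2) • u)) u)
    rw [hu1 u hu, mul_one, ← dist_eq_norm] at h3
    have h4 : ⟪x, u⟫ < ⟪z', u⟫ := by linarith
    nlinarith
  have hB : ∀ x ∈ C, x ∉ K₀ → ∀ᶠ j in atTop, x ∉ K j := by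
    intro x hx hxK
    have ht : max t₀ ⟪x, v⟫ + 1 > t₀ := by
      have := le_max_left t₀ ⟪x, v⟫
      linarith
    have hcl : IsClosed (K₀ ∩ Cminus n C v (max t₀ ⟪x, v⟫ + 1)) :=
      hK₀c.inter (hCc.inter (isClosed_le (by fun_prop) continuous_const))
    have hne' : (K₀ ∩ Cminus n C v (max t₀ ⟪x, v⟫ + 1)).Nonempty :=
      hne₀.mono (inter_subset_inter_right _ fun z hz => ⟨hz.1, le_trans hz.2 ht.le⟩)
    have hpos : 0 < Metric.infDist x (K₀ ∩ Cminus n C v (max t₀ ⟪x, v⟫ + 1)) :=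
      (hcl.notMem_iff_infDist_pos hne').1 fun h => hxK h.1
    filter_upwards [(hlim _ ht).eventually_lt_const hpos] with j hj hxj
    have hmem : x ∈ K j ∩ Cminus n C v (max t₀ ⟪x, v⟫ + 1) :=
      ⟨hxj, hx, (le_max_right t₀ ⟪x, v⟫).trans (by linarith)⟩
    have := Metric.infDist_le_hausdorffDist_of_mem hmem (hfin _ ht j)
    linarith
  refine tendsto_order.2 ⟨fun a ha => ?_, fun b hb => ?_⟩
  · obtain ⟨a', ha'1, ha'2⟩ := exists_between (max_lt ha hg)
    have ha'0 : 0 < a' := (le_max_right _ _).trans_lt ha'1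
    have haa : a < a' := (le_max_left _ _).trans_lt ha'1
    have hx : a'⁻¹ • y ∈ interior K₀ := by
      rw [mem_interior]
      refine ⟨(fun z : En n => a' • z) ⁻¹' interior C ∩ {z | 1 < gP n P₀ z}, ?_,
        (isOpen_interior.preimage (continuous_const_smul a')).inter
          (isOpen_lt continuous_const (gP_cont hP₀.1 hP₀.2.1)), ?_, ?_⟩
      · rintro z ⟨hz1, hz2⟩
        have hz3 : 1 < gP n P₀ z := hz2
        rw [hKP₀]
        refine ⟨?_, hz3.le⟩
        have := hC _ (interior_subset hz1) a'⁻¹ (by positivity)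
        simpa [smul_smul, inv_mul_cancel₀ ha'0.ne'] using this
      · show a' • (a'⁻¹ • y) ∈ interior C
        rw [smul_smul, mul_inv_cancel₀ ha'0.ne', one_smul]
        exact hy
      · show 1 < gP n P₀ _
        rw [gP_smul hP₀.1 hP₀.2.1 _ (by positivity), lt_inv_mul_iff₀ ha'0, mul_one]
        exact ha'2
    filter_upwards [hA _ hx] with j hj
    rw [hKP j] at hj
    have h1 : 1 ≤ gP n (P j) (a'⁻¹ • y) := hj.2
    rw [gP_smul (hP j).1 (hP j).2.1 _ (by positivity), le_inv_mul_iff₀ ha'0, mul_one] at h1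
    linarith
  · have hb0 : 0 < b := hg.trans hb
    have hxC : b⁻¹ • y ∈ C := hC y (interior_subset hy) _ (by positivity)
    have hx : b⁻¹ • y ∉ K₀ := by
      rw [hKP₀]
      rintro ⟨-, h1⟩
      have h1 : 1 ≤ gP n P₀ (b⁻¹ • y) := h1
      rw [gP_smul hP₀.1 hP₀.2.1 _ (by positivity), le_inv_mul_iff₀ hb0, mul_one] at h1
      linarith
    filter_upwards [hB _ hxC hx] with j hj
    by_contra hlt
    push Not at hlt
    apply hj
    rw [hKP j]
    refine ⟨hxC, ?_⟩
    show 1 ≤ gP n (P j) _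
    rw [gP_smul (hP j).1 (hP j).2.1 _ (by positivity), le_inv_mul_iff₀ hb0, mul_one]
    exact hlt

lemma Eset_bdd {n : ℕ} {C ϖ P K : Set (En n)} (hu1 : ∀ u ∈ ϖ, ‖u‖ = 1) {c R0 : ℝ} (hc : 0 < c)
    (hb : ∀ u ∈ ϖ, ∀ y ∈ C, ⟪y, u⟫ ≤ -(c * ‖y‖)) (hP : GoodP n ϖ P)
    (hKP : K = C ∩ {x | 1 ≤ gP n P x}) {x0 : En n} (hx0 : x0 ∈ K) (hR0 : ‖x0‖ ≤ R0) :
    Eset n C P ⊆ interior C ∩ Metric.ball 0 (R0 / c + 1) := by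
  rintro y ⟨hyi, -, hy1⟩
  refine ⟨hyi, ?_⟩
  rw [mem_ball_zero_iff]
  obtain ⟨p, hp, he⟩ := gP_exists hP.1 hP.2.1 y
  obtain ⟨u, hu, s, hs, rfl⟩ := hP.2.2 p hp
  rw [he, inner_neg_right, real_inner_smul_right] at hy1
  rw [hKP] at hx0
  have h1 : 1 ≤ ⟪x0, -(s • u)⟫ := le_trans hx0.2 (gP_le hP.1 _ hp)
  rw [inner_neg_right, real_inner_smul_right] at h1
  have h2 := hb u hu y (interior_subset hyi)
  have h3 := neg_le_of_abs_le (abs_real_inner_le_norm x0 u)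
  rw [hu1 u hu, mul_one] at h3
  have h4 : c * ‖y‖ ≤ R0 := by
    have : s * (c * ‖y‖) ≤ s * R0 := by nlinarith
    exact le_of_mul_le_mul_left this hs
  have : ‖y‖ ≤ R0 / c := by rw [le_div_iff₀ hc]; linarith
  linarith

/-- If `K_j ∈ K(C,ϖ)` and `K_j → K₀` (in the sense of convergence of
`C`-pseudo-cones), then `V_{K_j}^Θ → V_{K₀}^Θ` weakly. -/
theorem statement5 (n : ℕ) (hn : 2 ≤ n) (C : Set (En n)) (hC : IsGoodCone n C)
    (v : En n) (hv1 : ‖v‖ = 1) (hv2 : v ∈ interior C) (hv3 : -v ∈ interior (dualCone n C))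
    (q : ℝ) (hq1 : (n : ℝ) - 1 < q) (hq2 : q < n)
    (Θ : En n → ℝ) (hΘ : IsThetaWeight n C q Θ)
    (ϖ : Set (En n)) (hϖne : ϖ.Nonempty) (hϖc : IsCompact ϖ) (hϖsub : ϖ ⊆ omegaDual n C)
    (K : ℕ → Set (En n)) (K₀ : Set (En n))
    (hKj : ∀ j, CDetermined n C ϖ (K j)) (hK₀ : CDetermined n C ϖ K₀)
    (hconv : ∃ t₀ > (0 : ℝ), (∀ j, (K j ∩ Cminus n C v t₀).Nonempty) ∧
      (K₀ ∩ Cminus n C v t₀).Nonempty ∧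
      ∀ t > t₀, Tendsto
        (fun j => Metric.hausdorffDist (K j ∩ Cminus n C v t) (K₀ ∩ Cminus n C v t))
        atTop (nhds 0))
    (μ : ℕ → Measure (En n)) (μ₀ : Measure (En n))
    (hμ : ∀ j, RepsConeVol n C Θ (K j) (μ j)) (hμ₀ : RepsConeVol n C Θ K₀ μ₀) :
    ∀ f : BoundedContinuousFunction (En n) ℝ,
      Tendsto (fun j => ∫ x, f x ∂(μ j)) atTop (nhds (∫ x, f x ∂μ₀)) := by
  obtain ⟨hCc, hCv, hCs, -, -⟩ := hC
  have hu1 : ∀ u ∈ ϖ, ‖u‖ = 1 := fun u hu => by simpa using (hϖsub hu).1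
  have hne : Nonempty (Fin n) := ⟨⟨0, by omega⟩⟩
  choose P hP hKP using fun j => exists_P n C ϖ (K j) hϖc hϖne hϖsub (hKj j)
  obtain ⟨P₀, hP₀, hKP₀⟩ := exists_P n C ϖ K₀ hϖc hϖne hϖsub hK₀
  have hKc : ∀ j, IsClosed (K j) := fun j => (hKj j).1.1.2.1
  have hK₀c : IsClosed K₀ := hK₀.1.1.2.1
  have hgl : ∀ y ∈ interior C ∩ {z | 0 < gP n P₀ z},
      Tendsto (fun j => gP n (P j) y) atTop (𝓝 (gP n P₀ y)) := fun y hy =>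
    g_tendsto hCs hv3 hu1 hK₀c hP hP₀ hKP hKP₀ hconv hCc hy.1 hy.2
  obtain ⟨c, hc, hb⟩ := cone_bound n C ϖ hϖc (fun u hu => (hϖsub hu).2)
  obtain ⟨t₀, -, hne1, hne0, -⟩ := hconv
  obtain ⟨R0, hR0, hR⟩ := Cminus_bdd (C := C) hv3 t₀
  set D : Set (En n) := interior C ∩ Metric.ball 0 (R0 / c + 1) with hD
  have hDm : MeasurableSet D := isOpen_interior.measurableSet.inter measurableSet_ball
  have hE : ∀ j, Eset n C (P j) ⊆ D := fun j => by
    obtain ⟨x0, hx0, hx0'⟩ := hne1 j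
    exact Eset_bdd hu1 hc hb (hP j) (hKP j) hx0 (hR x0 hx0')
  have hE₀ : Eset n C P₀ ⊆ D := by
    obtain ⟨x0, hx0, hx0'⟩ := hne0
    exact Eset_bdd hu1 hc hb hP₀ hKP₀ hx0 (hR x0 hx0')
  have hfin : HTheta n Θ D < ⊤ := HTheta_fin hn hCc hCs hq2 hΘ (by positivity)
  intro f
  have key : ∀ Q : Set (En n), GoodP n ϖ Q → Eset n C Q ⊆ D → ∀ (L : Set (En n)) (m : Measure (En n)),
      IsClosed L → L = C ∩ {x | 1 ≤ gP n Q x} → RepsConeVol n C Θ L m →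
      ∫ x, f x ∂m =
        ∫ y in D, (Eset n C Q).indicator (fun y => f (alph n Q y)) y ∂(HTheta n Θ) := by
    intro Q hQ hQD L m hL hLQ hm
    rw [rep_measure hn hCc hCv hCs hL hϖsub hQ hLQ Θ m hm,
      integral_map (alph_measurable n Q).aemeasurable f.continuous.aestronglyMeasurable,
      setIntegral_indicator (Eset_meas hQ.1 hQ.2.1), inter_eq_self_of_subset_right hQD]
  rw [key P₀ hP₀ hE₀ K₀ μ₀ hK₀c hKP₀ hμ₀]
  simp_rw [fun j => key (P j) (hP j) (hE j) (K j) (μ j) (hKc j) (hKP j) (hμ j)]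
  have hfm : IsFiniteMeasure ((HTheta n Θ).restrict D) := ⟨by
    rw [Measure.restrict_apply_univ]; exact hfin⟩
  apply tendsto_integral_of_dominated_convergence (fun _ => ‖f‖)
  · intro j
    exact ((f.continuous.measurable.comp (alph_measurable n (P j))).indicator
      (Eset_meas (hP j).1 (hP j).2.1)).aestronglyMeasurable
  · exact integrable_const _
  · intro j
    refine Filter.Eventually.of_forall fun y => ?_
    refine (norm_indicator_le_norm_self _ _).trans (f.norm_coe_le_norm _)
  · rw [ae_restrict_iff' hDm]
    apply (HTheta_ac n Θ).ae_le
    have a0 : ∀ᵐ y ∂(volume : Measure (En n)), y ≠ 0 :=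
      compl_mem_ae_iff.2 (measure_singleton (0 : En n))
    have a1 : ∀ᵐ y ∂(volume : Measure (En n)), y ∉ frontier K₀ :=
      compl_mem_ae_iff.2 (hK₀.1.1.2.2.1.addHaar_frontier _)
    have a2 : ∀ᵐ y ∂(volume : Measure (En n)), ∀ j, DifferentiableAt ℝ (gP n (P j)) y :=
      ae_all_iff.2 fun j => gP_ae_diff (hP j).1 (hP j).2.1
    filter_upwards [a0, a1, a2, gP_ae_diff hP₀.1 hP₀.2.1] with y hy0 hyf hd hd₀ hyD
    have hyi : y ∈ interior C := hyD.1
    have hpos : ∀ Q, GoodP n ϖ Q → 0 < gP n Q y := by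
      intro Q hQ
      obtain ⟨p, hp, he⟩ := gP_exists hQ.1 hQ.2.1 y
      obtain ⟨u, hu, s, hs, rfl⟩ := hQ.2.2 p hp
      rw [he, inner_neg_right, real_inner_smul_right]
      have h1 := hb u hu y (interior_subset hyi)
      have h2 : 0 < c * ‖y‖ := mul_pos hc (norm_pos_iff.2 hy0)
      nlinarith
    have hlim := hgl y ⟨hyi, hpos _ hP₀⟩
    have hne1 : gP n P₀ y ≠ 1 := fun h =>
      hyf (mem_frontier_of_one hP₀.1 hP₀.2.1 hKP₀ (interior_subset hyi) h)
    rcases lt_or_gt_of_ne hne1 with h | h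
    · have hgrad := grad_tendsto (fun j => ⟨(hP j).1, (hP j).2.1⟩)
        (isOpen_interior.inter (isOpen_lt continuous_const (gP_cont hP₀.1 hP₀.2.1))) hgl
        ⟨hyi, hpos _ hP₀⟩ hd hd₀
      have hg0 : gradient (gP n P₀) y ≠ 0 := by
        intro h0
        have := alph_mem hP₀ hu1 hd₀
        have := hu1 _ this
        rw [alph, h0] at this
        simp at this
      have halph : Tendsto (fun j => alph n (P j) y) atTop (𝓝 (alph n P₀ y)) :=
        ((hgrad.norm.inv₀ (norm_ne_zero_iff.2 hg0)).smul hgrad).neg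
      have hmem₀ : y ∈ Eset n C P₀ := ⟨hyi, hpos _ hP₀, h.le⟩
      rw [indicator_of_mem hmem₀]
      refine ((f.continuous.tendsto _).comp halph).congr' ?_
      filter_upwards [hlim.eventually_lt_const h] with j hj
      have hmem : y ∈ Eset n C (P j) := ⟨hyi, hpos _ (hP j), hj.le⟩
      rw [indicator_of_mem hmem]
      rfl
    · have hmem₀ : y ∉ Eset n C P₀ := fun hm => by
        have := hm.2.2
        linarith
      rw [indicator_of_notMem hmem₀]
      refine tendsto_const_nhds.congr' ?_
      filter_upwards [hlim.eventually_const_lt h] with j hj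
      have hmem : y ∉ Eset n C (P j) := fun hm => by
        have := hm.2.2
        linarith
      rw [indicator_of_notMem hmem]
end
end

section
/- Let K ∈ ps(C) satisfy b(K) = 1, where b(K) is the distance of K from the origin. Let ω ⊂ Ω_{C°} be a Borel set with Δ(ω) = τ > 0. Then there is a constant c, depending only on C, Θ and τ, such that V_K^Θ(ω) < c. -/
open MeasureTheory Set Filter
open scoped RealInnerProductSpace ENNReal Topology Pointwise NNReal

noncomputable section

theorem dualCone_isClosed (n : ℕ) (C : Set (En n)) : IsClosed (dualCone n C) := by
  have : dualCone n C = ⋂ y ∈ C, {x : En n | ⟪x, y⟫ ≤ 0} := by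
    ext x; simp [dualCone]
  rw [this]
  refine isClosed_biInter fun y _ => ?_
  exact isClosed_le (by fun_prop) continuous_const

theorem dualCone_convex (n : ℕ) (C : Set (En n)) : Convex ℝ (dualCone n C) := by
  intro x hx z hz a b ha hb _ y hy
  rw [inner_add_left, real_inner_smul_left, real_inner_smul_left]
  have h1 := mul_nonneg ha (neg_nonneg.2 (hx y hy))
  have h2 := mul_nonneg hb (neg_nonneg.2 (hz y hy))
  linarith

theorem dualCone_smul (n : ℕ) (C : Set (En n)) {r : ℝ} (hr : 0 ≤ r) {x : En n}
    (hx : x ∈ dualCone n C) : r • x ∈ dualCone n C := by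
  intro y hy
  rw [real_inner_smul_left]
  have h1 := mul_nonneg hr (neg_nonneg.2 (hx y hy))
  linarith

theorem dualCone_smul_interior (n : ℕ) (C : Set (En n)) {r : ℝ} (hr : 0 < r) {x : En n}
    (hx : x ∈ interior (dualCone n C)) : r • x ∈ interior (dualCone n C) := by
  have h1 : r • x ∈ r • interior (dualCone n C) := smul_mem_smul_set hx
  rw [← interior_smul₀ hr.ne'] at h1
  refine interior_mono ?_ h1
  rintro _ ⟨z, hz, rfl⟩
  exact dualCone_smul n C hr.le hz

theorem cone_gap (n : ℕ) (C : Set (En n)) (u y : En n) (hu : u ∈ omegaDual n C)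
    (hy : y ∈ C) (hy1 : ‖y‖ = 1) (τ s₀ : ℝ) (hs1 : s₀ ≤ 1 / 2)
    (hs2 : s₀ ^ 2 ≤ 1 - Real.cos τ) (hτ : 0 < τ)
    (h : ∀ v ∈ closure (omegaDual n C) \ omegaDual n C, τ ≤ InnerProductGeometry.angle u v) :
    ⟪u, y⟫ ≤ -s₀ := by
  by_contra hcon
  push Not at hcon
  have hu1 : ‖u‖ = 1 := by simpa using hu.1
  have huC : u ∈ dualCone n C := interior_subset hu.2
  have hs0 : ⟪u, y⟫ ≤ 0 := huC y hy
  obtain ⟨s, hs⟩ : ∃ s : ℝ, ⟪u, y⟫ = -s := ⟨-⟪u, y⟫, by ring⟩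
  rw [hs] at hcon hs0
  have hyy : ⟪y, y⟫ = 1 := by rw [real_inner_self_eq_norm_sq, hy1]; norm_num
  have huu : ⟪u, u⟫ = 1 := by rw [real_inner_self_eq_norm_sq, hu1]; norm_num
  have hbd : ∀ t : ℝ, u + t • y ∈ dualCone n C → t ≤ s := by
    intro t ht
    have := ht y hy
    rw [inner_add_left, real_inner_smul_left, hyy, hs] at this
    linarith
  have hcomp : IsCompact {t : ℝ | t ∈ Icc 0 s ∧ u + t • y ∈ dualCone n C} := by
    refine isCompact_Icc.inter_right (t := {t : ℝ | u + t • y ∈ dualCone n C}) ?_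
    exact (dualCone_isClosed n C).preimage (by fun_prop)
  obtain ⟨t, ⟨⟨ht0, hts⟩, htC⟩, hmax⟩ := hcomp.exists_isGreatest
    ⟨0, ⟨⟨le_refl _, by linarith⟩, by simpa using huC⟩⟩
  set w := u + t • y with hw
  have hwi : w ∉ interior (dualCone n C) := by
    intro hwi
    have hc : Tendsto (fun e : ℝ => w + e • y) (𝓝[>] 0) (𝓝 w) := by
      have : ContinuousAt (fun e : ℝ => w + e • y) 0 := by fun_prop
      have h2 := this.tendsto
      simp only [zero_smul, add_zero] at h2
      exact h2.mono_left nhdsWithin_le_nhds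
    have h3 := (hc.eventually (mem_interior_iff_mem_nhds.1 hwi)).and self_mem_nhdsWithin
    obtain ⟨e, he, he0⟩ := h3.exists
    have he0 : 0 < e := he0
    have h4 : u + (t + e) • y ∈ dualCone n C := by
      have : u + (t + e) • y = w + e • y := by rw [hw, add_smul, add_assoc]
      rw [this]; exact he
    have h5 : t + e ≤ t := hmax ⟨⟨by linarith, hbd _ h4⟩, h4⟩
    linarith
  have hwu : ⟪u, w⟫ = 1 - t * s := by
    rw [hw, inner_add_right, real_inner_smul_right, huu, hs]; ring
  have hww : ‖w‖ ^ 2 = 1 - 2 * (t * s) + t ^ 2 := by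
    rw [← real_inner_self_eq_norm_sq, hw, inner_add_left, inner_add_right, inner_add_right,
      real_inner_smul_left, real_inner_smul_left, real_inner_smul_right, real_inner_smul_right,
      huu, hyy, real_inner_comm u y, hs]; ring
  have hts2 : t * s ≤ s ^ 2 := by nlinarith
  have hss : s ^ 2 < s₀ ^ 2 := by nlinarith
  have hs4 : s ^ 2 ≤ 1 / 4 := by nlinarith
  have hw1 : ‖w‖ ≤ 1 := by
    have : ‖w‖ ^ 2 ≤ 1 := by rw [hww]; nlinarith
    nlinarith [norm_nonneg w]
  have hw0 : 0 < ‖w‖ := by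
    have : 0 < ‖w‖ ^ 2 := by rw [hww]; nlinarith [sq_nonneg t]
    rcases (norm_nonneg w).eq_or_lt with h0 | h0
    · rw [← h0] at this; norm_num at this
    · exact h0
  have hwne : w ≠ 0 := norm_pos_iff.1 hw0
  have hv1 : ‖w‖⁻¹ • w ∉ omegaDual n C := by
    intro hv
    apply hwi
    have := dualCone_smul_interior n C hw0 hv.2
    rwa [smul_smul, mul_inv_cancel₀ hw0.ne', one_smul] at this
  have hv2 : ‖w‖⁻¹ • w ∈ closure (omegaDual n C) := by
    have hc : ContinuousAt (fun e : ℝ => ‖e • u + (1 - e) • w‖⁻¹ • (e • u + (1 - e) • w)) 0 := by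
      have h0 : ‖(0 : ℝ) • u + (1 - (0 : ℝ)) • w‖ ≠ 0 := by simpa using hwne
      have hca : ContinuousAt (fun e : ℝ => e • u + (1 - e) • w) 0 := by fun_prop
      exact (hca.norm.inv₀ h0).smul hca
    have h2 := hc.tendsto.mono_left (nhdsWithin_le_nhds (s := Ioi (0 : ℝ)))
    simp only [zero_smul, zero_add, sub_zero, one_smul] at h2
    have hne : ∀ᶠ e : ℝ in 𝓝[>] 0, e • u + (1 - e) • w ≠ 0 := by
      have h5 : ContinuousAt (fun e : ℝ => e • u + (1 - e) • w) 0 := by fun_prop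
      have h6 := h5.tendsto.mono_left (nhdsWithin_le_nhds (s := Ioi (0 : ℝ)))
      simp only [zero_smul, zero_add, sub_zero, one_smul] at h6
      exact h6.eventually_ne hwne
    refine mem_closure_of_tendsto h2 ?_
    filter_upwards [hne, Ioc_mem_nhdsGT (zero_lt_one' ℝ)] with e he1 he2
    have hp : 0 < ‖e • u + (1 - e) • w‖ := norm_pos_iff.2 he1
    refine ⟨?_, ?_⟩
    · rw [mem_sphere_zero_iff_norm, norm_smul, norm_inv, norm_norm, inv_mul_cancel₀ hp.ne']
    · refine dualCone_smul_interior n C (inv_pos.2 hp) ?_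
      exact (dualCone_convex n C).combo_interior_self_mem_interior hu.2 htC he2.1
        (by linarith [he2.2]) (by ring)
  have hang := h _ ⟨hv2, hv1⟩
  rw [InnerProductGeometry.angle_smul_right_of_pos _ _ (inv_pos.2 hw0)] at hang
  have hcos := Real.cos_le_cos_of_nonneg_of_le_pi hτ.le
    (InnerProductGeometry.angle_le_pi u w) hang
  rw [InnerProductGeometry.cos_angle, hwu, hu1, one_mul, div_le_iff₀ hw0] at hcos
  have hc0 : Real.cos τ * ‖w‖ ≤ max (Real.cos τ) 0 := by
    calc Real.cos τ * ‖w‖ ≤ max (Real.cos τ) 0 * ‖w‖ := by gcongr; exact le_max_left _ _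
      _ ≤ max (Real.cos τ) 0 * 1 := by gcongr
      _ = _ := mul_one _
  rcases max_cases (Real.cos τ) 0 with ⟨h1, _⟩ | ⟨h1, _⟩ <;> rw [h1] at hc0 <;> linarith

theorem theta_finite (n : ℕ) (hn : 2 ≤ n) (C : Set (En n)) (hC : IsGoodCone n C)
    (q : ℝ) (hq2 : q < n) (Θ : En n → ℝ) (hΘ : IsThetaWeight n C q Θ) (R : ℝ) (hR : 0 < R) :
    HTheta n Θ (C ∩ Metric.ball 0 R) < ∞ := by
  obtain ⟨hcl, _, hcone, _, _⟩ := hC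
  obtain ⟨hcont, hpos, hhom⟩ := hΘ
  haveI : Nonempty (Fin n) := ⟨⟨0, by omega⟩⟩
  haveI : Nontrivial (En n) := inferInstance
  have hcomp : IsCompact (C ∩ Metric.sphere (0 : En n) 1) :=
    (isCompact_sphere _ _).inter_left hcl
  have hsub : C ∩ Metric.sphere (0 : En n) 1 ⊆ C \ {0} := by
    rintro x ⟨hx, hx1⟩
    refine ⟨hx, ?_⟩
    rintro rfl
    simp at hx1
  obtain ⟨M, hM⟩ := hcomp.bddAbove_image (hcont.mono hsub)
  have hbound : ∀ y ∈ C \ {0}, Θ y ≤ M * ‖y‖ ^ (-q) := by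
    intro y hy
    have hy0 : 0 < ‖y‖ := norm_pos_iff.2 (by simpa using hy.2)
    have hz : ‖y‖⁻¹ • y ∈ C ∩ Metric.sphere (0 : En n) 1 :=
      ⟨hcone y hy.1 _ (inv_nonneg.2 hy0.le), by simp [norm_smul, hy0.ne']⟩
    have h1 : Θ (‖y‖⁻¹ • y) ≤ M := hM ⟨_, hz, rfl⟩
    have h2 := hhom _ (hsub hz) ‖y‖ hy0
    rw [smul_smul, mul_inv_cancel₀ hy0.ne', one_smul] at h2
    rw [h2, mul_comm]
    gcongr
  have hint : IntegrableOn (fun y : En n => M * ‖y‖ ^ (-q)) (Metric.ball 0 R) := by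
    rw [integrableOn_fun_norm_addHaar volume (f := fun r : ℝ => M * r ^ (-q))]
    have h1 : IntegrableOn (fun r : ℝ => r ^ ((n : ℝ) - 1 - q)) (Ioo 0 R) :=
      (intervalIntegral.integrableOn_Ioo_rpow_iff hR).2 (by linarith)
    refine IntegrableOn.congr_fun (h1.const_mul M) ?_ measurableSet_Ioo
    intro r hr
    have hfr : Module.finrank ℝ (En n) = n := by simp
    simp only [hfr, smul_eq_mul]
    rw [← Real.rpow_natCast, Nat.cast_sub (by omega), sub_eq_add_neg _ q, Real.rpow_add hr.1]
    push_cast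
    ring
  have hms : MeasurableSet (C ∩ Metric.ball (0 : En n) R) :=
    hcl.measurableSet.inter Metric.isOpen_ball.measurableSet
  rw [HTheta, withDensity_apply _ hms]
  have hfin := (hint.mono_set (inter_subset_right (s := C))).lintegral_lt_top
  refine lt_of_le_of_lt ?_ hfin
  refine lintegral_mono_ae ?_
  have h0 : ∀ᵐ y : En n, y ≠ 0 := by
    simp [ae_iff]
  filter_upwards [ae_restrict_mem hms, ae_restrict_of_ae h0] with y hy hy0
  exact ENNReal.ofReal_le_ofReal (hbound y ⟨hy.1, hy0⟩)

theorem pseudo_sub_cone (n : ℕ) (C K : Set (En n)) (hK : IsCPseudoCone n C K) : K ⊆ C := by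
  obtain ⟨⟨_, hcl, hconv, _, hsc⟩, hrec⟩ := hK
  intro z hz
  rw [← hrec]
  intro x hx t ht
  have h2 : Tendsto (fun e : ℝ => (1 - e) • x + e • ((1 + t / e) • z)) (𝓝[>] 0)
      (𝓝 (x + t • z)) := by
    have h3 : Tendsto (fun e : ℝ => (1 - e) • x + (e + t) • z) (𝓝[>] 0)
        (𝓝 (x + t • z)) := by
      have : ContinuousAt (fun e : ℝ => (1 - e) • x + (e + t) • z) 0 := by fun_prop
      have h4 := this.tendsto.mono_left (nhdsWithin_le_nhds (s := Ioi (0 : ℝ)))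
      simpa using h4
    refine h3.congr' ?_
    filter_upwards [self_mem_nhdsWithin] with e he
    have he : 0 < e := he
    rw [smul_smul, mul_add, mul_div_cancel₀ _ he.ne', mul_one]
  refine hcl.mem_of_tendsto h2 ?_
  filter_upwards [Ioc_mem_nhdsGT (zero_lt_one' ℝ)] with e he
  refine hconv hx (hsc (1 + t / e) ?_ (smul_mem_smul_set hz)) (by linarith [he.2]) he.1.le
    (by ring)
  have := div_nonneg ht he.1.le
  linarith

/-- If `K ∈ ps(C)` with `b(K) = 1` and `ω ⊆ Ω_{C°}` is a Borel set with
`Δ(ω) = τ > 0`, then `V_K^Θ(ω) < c` with a constant `c` depending only on `C`, `Θ`, `τ`. -/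
theorem statement7 (n : ℕ) (hn : 2 ≤ n) (C : Set (En n)) (hC : IsGoodCone n C)
    (q : ℝ) (hq1 : (n : ℝ) - 1 < q) (hq2 : q < n)
    (Θ : En n → ℝ) (hΘ : IsThetaWeight n C q Θ)
    (τ : ℝ) (hτ : 0 < τ) :
    ∃ c : ℝ, 0 < c ∧ ∀ K ω : Set (En n), IsCPseudoCone n C K → distOrigin n K = 1 →
      MeasurableSet ω → ω ⊆ omegaDual n C → sphereAngleDist n C ω = τ →
      coneVol n Θ K ω < ENNReal.ofReal c := by
  set τ' := min τ Real.pi with hτ'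
  have hτ'0 : 0 < τ' := lt_min hτ Real.pi_pos
  have hcos : Real.cos τ' < 1 := by
    have := Real.cos_lt_cos_of_nonneg_of_le_pi le_rfl (min_le_right τ Real.pi) hτ'0
    simpa using this
  set s₀ := min (1 / 2) (Real.sqrt (1 - Real.cos τ')) with hs₀
  have hs0 : 0 < s₀ := lt_min (by norm_num) (Real.sqrt_pos.2 (by linarith))
  have hs2 : s₀ ^ 2 ≤ 1 - Real.cos τ' := by
    calc s₀ ^ 2 ≤ Real.sqrt (1 - Real.cos τ') ^ 2 := by
          gcongr; exact min_le_right _ _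
      _ = _ := Real.sq_sqrt (by linarith)
  have hfin := theta_finite n hn C hC q hq2 Θ hΘ (1 / s₀ + 1) (by positivity)
  refine ⟨(HTheta n Θ (C ∩ Metric.ball 0 (1 / s₀ + 1))).toReal + 1, by positivity, ?_⟩
  intro K ω hK hb _ hω hΔ
  have hsub : (⋃ x ∈ nuInv n K ω, segment ℝ (0 : En n) x) ⊆ C ∩ Metric.ball 0 (1 / s₀ + 1) := by
    intro p hp
    simp only [mem_iUnion] at hp
    obtain ⟨x, ⟨hxf, u, huω, hnu⟩, hp⟩ := hp
    have hKC := pseudo_sub_cone n C K hK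
    obtain ⟨⟨hne, hcl, hconv, h0, hsc⟩, hrec⟩ := hK
    have hxK : x ∈ K := hcl.frontier_subset hxf
    have hxC : x ∈ C := hKC hxK
    have hu : u ∈ normalsAt n K x := by rw [hnu]; rfl
    have hx0 : 0 < ‖x‖ := norm_pos_iff.2 (fun h => h0 (h ▸ hxK))
    have hang : ∀ v ∈ closure (omegaDual n C) \ omegaDual n C,
        τ' ≤ InnerProductGeometry.angle u v := by
      intro v hv
      refine (min_le_left _ _).trans ?_
      rw [← hΔ]
      refine csInf_le ⟨0, ?_⟩ ⟨u, huω, v, hv, rfl⟩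
      rintro _ ⟨a, _, b, _, rfl⟩
      exact InnerProductGeometry.angle_nonneg _ _
    have hgap := cone_gap n C u (‖x‖⁻¹ • x) (hω huω)
      (hC.2.2.1 x hxC _ (inv_nonneg.2 hx0.le)) (by simp [norm_smul, hx0.ne']) τ' s₀
      (min_le_left _ _) hs2 hτ'0 hang
    rw [real_inner_smul_right, inv_mul_le_iff₀ hx0] at hgap
    obtain ⟨z, hz, hzd⟩ := hcl.exists_infDist_eq_dist hne (0 : En n)
    have hz1 : ‖z‖ = 1 := by
      rw [← dist_zero_left, ← hzd]; exact hb
    have h1 := hu.2 z hz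
    have h2 : -1 ≤ ⟪z, u⟫ := by
      have := neg_le_of_abs_le (abs_real_inner_le_norm z u)
      rwa [hz1, hu.1, one_mul] at this
    rw [real_inner_comm] at hgap
    have hxs : ‖x‖ ≤ 1 / s₀ := by
      rw [le_div_iff₀ hs0]; linarith
    obtain ⟨a, b, ha, hb', hab, rfl⟩ := hp
    rw [smul_zero, zero_add]
    refine ⟨hC.2.2.1 x hxC b hb', ?_⟩
    rw [mem_ball_zero_iff, norm_smul, Real.norm_of_nonneg hb']
    have : b * ‖x‖ ≤ 1 * ‖x‖ := by gcongr; linarith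
    linarith
  calc coneVol n Θ K ω ≤ HTheta n Θ (C ∩ Metric.ball 0 (1 / s₀ + 1)) := measure_mono hsub
    _ < _ := by
      rw [ENNReal.lt_ofReal_iff_toReal_lt hfin.ne]
      linarith
end
end

section
/- Let K ∈ ps(C), let ω ⊆ Ω_{C°} be a nonempty Borel set, and let g : ω → ℝ be bounded and measurable. Then ∫_ω g(u) S_{n−1}^Θ(K, du) = ∫_{α_K^{-1}(ω)} g(α_K(v)) Θ(r_K(v)) ρ_K(v)^{n−1}/|⟨v, α_K(v)⟩| dv, where dv denotes integration with respect to spherical Lebesgue measure on S^{n−1}. -/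
open MeasureTheory Set Filter
open scoped RealInnerProductSpace ENNReal Topology Pointwise NNReal

noncomputable section

/-! ### Auxiliary lemmas -/

/-- The radial projection onto the sphere. -/
def pr {n : ℕ} (x : En n) : En n := ‖x‖⁻¹ • x

lemma haus_le {X Y Z : Type*} [MetricSpace X] [MeasurableSpace X] [BorelSpace X]
    [MetricSpace Y] [MeasurableSpace Y] [BorelSpace Y]
    [MetricSpace Z] [MeasurableSpace Z] [BorelSpace Z]
    (f : X → Y) (g : X → Z) (A : Set X) (c : ℝ) (hc : 0 ≤ c) (m : ℕ)
    (h : ∀ x ∈ A, ∀ y ∈ A, dist (f x) (f y) ≤ c * dist (g x) (g y)) :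
    μH[(m : ℝ)] (f '' A) ≤ ENNReal.ofReal (c ^ m) * μH[(m : ℝ)] (g '' A) := by
  classical
  rcases A.eq_empty_or_nonempty with rfl | ⟨a, ha⟩
  · simp
  have : Nonempty X := ⟨a⟩
  set k : Z → Y := fun z => f (Function.invFunOn g A z) with hk
  have hkg : ∀ x ∈ A, k (g x) = f x := by
    intro x hx
    have h1 : ∃ y ∈ A, g y = g x := ⟨x, hx, rfl⟩
    have h2 := Function.invFunOn_mem h1
    have h3 := Function.invFunOn_eq h1
    have h4 := h _ h2 x hx
    rw [h3, dist_self, mul_zero] at h4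
    exact dist_le_zero.1 h4
  have hL : LipschitzOnWith (Real.toNNReal c) k (g '' A) := by
    apply LipschitzOnWith.of_dist_le_mul
    rintro _ ⟨x, hx, rfl⟩ _ ⟨y, hy, rfl⟩
    rw [hkg x hx, hkg y hy, Real.coe_toNNReal c hc]
    exact h x hx y hy
  have h5 := hL.hausdorffMeasure_image_le (d := (m : ℝ)) (by positivity)
  have h6 : k '' (g '' A) = f '' A := by
    rw [image_image]
    exact image_congr hkg
  rw [h6] at h5
  rw [ENNReal.ofReal_pow hc, ← ENNReal.rpow_natCast]
  exact h5

lemma exists_proj (m : ℕ) (u : En (m + 1)) (hu : ‖u‖ = 1) :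
    ∃ P : En (m + 1) →ₗ[ℝ] En m, ∀ z, ‖P z‖ ^ 2 = ‖z‖ ^ 2 - ⟪z, u⟫ ^ 2 := by
  have : Fact (Module.finrank ℝ (En (m + 1)) = m + 1) := ⟨by simp⟩
  have hu0 : u ≠ 0 := by rintro rfl; simp at hu
  let b := OrthonormalBasis.fromOrthogonalSpanSingleton (𝕜 := ℝ) m hu0
  refine ⟨b.repr.toLinearEquiv.toLinearMap ∘ₗ
    ((ℝ ∙ u)ᗮ.orthogonalProjectionOnto : En (m + 1) →ₗ[ℝ] (ℝ ∙ u)ᗮ), fun z => ?_⟩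
  have h1 := Submodule.norm_sq_eq_add_norm_sq_projection z (ℝ ∙ u)
  have h2 : ‖(ℝ ∙ u).orthogonalProjectionOnto z‖ ^ 2 = ⟪z, u⟫ ^ 2 := by
    rw [Submodule.coe_norm, ← Submodule.starProjection_apply,
      Submodule.starProjection_unit_singleton ℝ hu, norm_smul, hu, mul_one, Real.norm_eq_abs,
      sq_abs, real_inner_comm]
  have h3 : ‖(b.repr.toLinearEquiv.toLinearMap ∘ₗ
    ((ℝ ∙ u)ᗮ.orthogonalProjectionOnto : En (m + 1) →ₗ[ℝ] (ℝ ∙ u)ᗮ)) z‖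
      = ‖(ℝ ∙ u)ᗮ.orthogonalProjectionOnto z‖ := by
    simp
  rw [h3]; linarith

lemma proj_inner {m : ℕ} {u : En (m + 1)} {P : En (m + 1) →ₗ[ℝ] En m}
    (hP : ∀ z, ‖P z‖ ^ 2 = ‖z‖ ^ 2 - ⟪z, u⟫ ^ 2) (x y : En (m + 1)) :
    ⟪P x, P y⟫ = ⟪x, y⟫ - ⟪x, u⟫ * ⟪y, u⟫ := by
  have h1 := hP (x + y)
  rw [map_add, norm_add_sq_real, norm_add_sq_real, inner_add_left, hP x, hP y] at h1
  nlinarith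

/-- A linear endomorphism of the model hyperplane with known determinant. -/
lemma exists_M (m : ℕ) (w : En m) (s k : ℝ) (hs : 0 < s) (hk : 0 < k)
    (hw : ‖w‖ ^ 2 = 1 - k ^ 2) :
    ∃ M : En m →ₗ[ℝ] En m, (∀ z, ‖M z‖ ^ 2 = s ^ 2 * (‖z‖ ^ 2 - ⟪z, w⟫ ^ 2)) ∧
      |LinearMap.det M| = s ^ m * k := by
  set f : Module.Dual ℝ (En m) := (innerSL ℝ w).toLinearMap with hf
  have hfz : ∀ z, f z = ⟪z, w⟫ := fun z => by simp [hf, real_inner_comm]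
  refine ⟨s • LinearMap.transvection f (-(1 + k)⁻¹ • w), fun z => ?_, ?_⟩
  · have : (s • LinearMap.transvection f (-(1 + k)⁻¹ • w)) z
        = s • (z - ((1 + k)⁻¹ * ⟪z, w⟫) • w) := by
      rw [LinearMap.smul_apply, LinearMap.transvection.apply, hfz]
      module
    rw [this, norm_smul, mul_pow, Real.norm_eq_abs, sq_abs, norm_sub_sq_real, norm_smul, mul_pow,
      inner_smul_right, Real.norm_eq_abs, sq_abs, hw]
    field_simp
    ring
  · rw [LinearMap.det_smul, LinearMap.transvection.det, hfz, inner_smul_left,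
      real_inner_self_eq_norm_sq, hw]
    have : (1 + -(1 + k)⁻¹ * (1 - k ^ 2)) = k := by field_simp; ring
    simp only [finrank_euclideanSpace, Fintype.card_fin, map_neg, conj_trivial]
    rw [this, abs_of_pos (by positivity)]

lemma pr_strict {n : ℕ} (x0 : En n) (hx0 : x0 ≠ 0) (η : ℝ) (hη : 0 < η) :
    ∃ U : Set (En n), IsOpen U ∧ x0 ∈ U ∧ ∀ x ∈ U, ∀ y ∈ U,
      ‖pr x - pr y - ‖x0‖⁻¹ • ((x - y) - ⟪x - y, pr x0⟫ • pr x0)‖ ≤ η * ‖x - y‖ := by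
  have hN : 0 < ‖x0‖ := norm_pos_iff.2 hx0
  have h1 := (hasStrictFDerivAt_norm_sq x0).sqrt (by positivity)
  have h2 := (hasStrictDerivAt_inv (x := √(‖x0‖ ^ 2)) (by positivity)).comp_hasStrictFDerivAt x0 h1
  have h3 := h2.smul (hasStrictFDerivAt_id x0)
  have h4 := h3.isLittleO.def hη
  obtain ⟨U, hU, V, hV, hUV⟩ := mem_nhds_prod_iff.1 h4
  obtain ⟨W, hW, hWo, hxW⟩ := mem_nhds_iff.1 (Filter.inter_mem hU hV)
  refine ⟨W, hWo, hxW, fun x hx y hy => ?_⟩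
  have h5 := hUV (Set.mk_mem_prod (hW hx).1 (hW hy).2)
  simp only [Set.mem_ofPred_eq, Function.comp, id, Pi.smul_apply', Real.sqrt_sq (norm_nonneg _)] at h5
  refine le_trans (le_of_eq ?_) h5
  congr 1
  unfold pr
  congr 1
  simp
  rw [inner_smul_right, real_inner_comm, inner_sub_right]
  module
lemma le_of_sq_le_sq_aux {a b : ℝ} (h : a ^ 2 ≤ b ^ 2) (hb : 0 ≤ b) : a ≤ b :=
  abs_le_of_sq_le_sq' h hb |>.2


lemma local_dist (m : ℕ) (S : Set (En (m + 1))) (x0 u : En (m + 1)) (hx0 : x0 ≠ 0)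
    (hu : ‖u‖ = 1) (hk : ⟪pr x0, u⟫ ≠ 0)
    (hflat : ∀ ε > 0, ∃ U : Set (En (m + 1)), IsOpen U ∧ x0 ∈ U ∧
      ∀ x ∈ U ∩ S, ∀ y ∈ U ∩ S, |⟪x - y, u⟫| ≤ ε * ‖x - y‖)
    (a : ℝ) (ha0 : 0 < a) (ha1 : a < 1) :
    ∃ (P : En (m + 1) →ₗ[ℝ] En m) (M : En m →ₗ[ℝ] En m),
      |LinearMap.det M| = ‖x0‖⁻¹ ^ m * |⟪pr x0, u⟫| ∧
      ∃ U : Set (En (m + 1)), IsOpen U ∧ x0 ∈ U ∧ ∀ x ∈ U ∩ S, ∀ y ∈ U ∩ S,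
        ‖P (x - y)‖ ≤ ‖x - y‖ ∧ a * ‖x - y‖ ≤ ‖P (x - y)‖ ∧
        a * ‖M (P (x - y))‖ ≤ ‖pr x - pr y‖ ∧ a * ‖pr x - pr y‖ ≤ ‖M (P (x - y))‖ := by
  have hN : 0 < ‖x0‖ := norm_pos_iff.2 hx0
  obtain ⟨P, hP⟩ := exists_proj m u hu
  set v := pr x0 with hv
  have hvn : ‖v‖ = 1 := by
    rw [hv, pr, norm_smul, norm_inv, norm_norm, inv_mul_cancel₀ hN.ne']
  set s := ‖x0‖⁻¹ with hs
  have hs0 : 0 < s := by positivity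
  set k := |⟪v, u⟫| with hkk
  have hk0 : 0 < k := abs_pos.2 hk
  have hk1 : k ≤ 1 := by
    have := abs_real_inner_le_norm v u
    rwa [hvn, hu, one_mul] at this
  have hw : ‖P v‖ ^ 2 = 1 - k ^ 2 := by
    rw [hP, hvn, hkk, sq_abs, one_pow]
  obtain ⟨M, hM, hdet⟩ := exists_M m (P v) s k hs0 hk0 hw
  refine ⟨P, M, hdet, ?_⟩
  obtain ⟨U1, hU1, hx1, h1⟩ := pr_strict x0 hx0 ((1 - a) * a * s * k / 2)
    (by have := sub_pos.2 ha1; positivity)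
  obtain ⟨U2, hU2, hx2, h2⟩ := hflat ((1 - a) * a * k / 4)
    (by have := sub_pos.2 ha1; positivity)
  refine ⟨U1 ∩ U2, hU1.inter hU2, ⟨hx1, hx2⟩, ?_⟩
  rintro x ⟨⟨hxU1, hxU2⟩, hxS⟩ y ⟨⟨hyU1, hyU2⟩, hyS⟩
  have e1 := h1 x hxU1 y hyU1
  have e2 := h2 x ⟨hxU2, hxS⟩ y ⟨hyU2, hyS⟩
  set z := x - y with hz
  clear_value z
  have hPz := hP z
  have hsa := sub_pos.2 ha1
  have hPle : ‖P z‖ ≤ ‖z‖ := by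
    refine le_of_sq_le_sq_aux ?_ (norm_nonneg _)
    nlinarith [sq_nonneg ⟪z, u⟫]
  have hε : (1 - a) * a * k / 4 ≤ 1 - a := by
    have : a * k ≤ 1 := by nlinarith
    nlinarith
  have hε' : ((1 - a) * a * k / 4) ^ 2 ≤ 1 - a ^ 2 := by
    have h0 : 0 ≤ (1 - a) * a * k / 4 := by positivity
    nlinarith
  have hzu : ⟪z, u⟫ ^ 2 ≤ (1 - a ^ 2) * ‖z‖ ^ 2 := by
    have := pow_le_pow_left₀ (abs_nonneg _) e2 2
    rw [sq_abs, mul_pow] at this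
    exact this.trans (mul_le_mul_of_nonneg_right hε' (sq_nonneg _))
  have hPge : a * ‖z‖ ≤ ‖P z‖ := by
    refine le_of_sq_le_sq_aux ?_ (norm_nonneg _)
    nlinarith
  -- the norm of `M (P z)`
  have hMP : ‖M (P z)‖ = ‖s • ((z - ⟪z, u⟫ • u) - ⟪z - ⟪z, u⟫ • u, v⟫ • v)‖ := by
    rw [← sq_eq_sq₀ (norm_nonneg _) (norm_nonneg _), hM, norm_smul, mul_pow, Real.norm_eq_abs,
      sq_abs, hPz, proj_inner hP]
    congr 1
    rw [norm_sub_sq_real, norm_sub_sq_real, norm_smul, norm_smul, inner_smul_right,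
      inner_smul_right, inner_sub_left, inner_smul_left, hu, hvn, mul_one, mul_one,
      Real.norm_eq_abs, Real.norm_eq_abs, sq_abs, sq_abs, real_inner_comm u v]
    simp only [conj_trivial]
    ring
  have hMge : s * k * ‖P z‖ ≤ ‖M (P z)‖ := by
    refine le_of_sq_le_sq_aux ?_ (norm_nonneg _)
    rw [hM]
    have h3 := abs_real_inner_le_norm (P z) (P v)
    have h4 := pow_le_pow_left₀ (abs_nonneg _) h3 2
    rw [sq_abs, mul_pow, hw] at h4
    have : s ^ 2 * (k ^ 2 * ‖P z‖ ^ 2) ≤ s ^ 2 * (‖P z‖ ^ 2 - ⟪P z, P v⟫ ^ 2) := by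
      apply mul_le_mul_of_nonneg_left _ (sq_nonneg _)
      linarith
    calc _ = s ^ 2 * (k ^ 2 * ‖P z‖ ^ 2) := by ring
      _ ≤ _ := this
  -- closeness
  have hd : ‖(pr x - pr y) - s • ((z - ⟪z, u⟫ • u) - ⟪z - ⟪z, u⟫ • u, v⟫ • v)‖
      ≤ (1 - a) * (a * ‖z‖) * (s * k) := by
    have : (pr x - pr y) - s • ((z - ⟪z, u⟫ • u) - ⟪z - ⟪z, u⟫ • u, v⟫ • v)
      = (pr x - pr y - s • (z - ⟪z, v⟫ • v)) + (s * ⟪z, u⟫) • (u - ⟪u, v⟫ • v) := by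
      rw [inner_sub_left, inner_smul_left]
      simp only [conj_trivial]
      module
    rw [this]
    refine (norm_add_le _ _).trans ?_
    have h5 : ‖u - ⟪u, v⟫ • v‖ ≤ 2 := by
      refine (norm_sub_le _ _).trans ?_
      rw [norm_smul, hvn, hu, Real.norm_eq_abs, real_inner_comm]
      linarith
    have h6 : ‖(s * ⟪z, u⟫) • (u - ⟪u, v⟫ • v)‖ ≤ (s * ((1 - a) * a * k / 4 * ‖z‖)) * 2 := by
      rw [norm_smul, norm_mul, Real.norm_eq_abs, Real.norm_eq_abs, abs_of_pos hs0]
      gcongr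
    calc _ ≤ (1 - a) * a * s * k / 2 * ‖z‖ + (s * ((1 - a) * a * k / 4 * ‖z‖)) * 2 :=
          add_le_add e1 h6
      _ = _ := by ring
  have hd2 : (1 - a) * (a * ‖z‖) * (s * k) ≤ (1 - a) * ‖M (P z)‖ := by
    calc _ ≤ (1 - a) * ‖P z‖ * (s * k) := by gcongr
      _ = (1 - a) * (s * k * ‖P z‖) := by ring
      _ ≤ _ := by gcongr
  have h7 := hd.trans hd2
  have h8 := (abs_norm_sub_norm_le _ _).trans h7
  rw [← hMP] at h8
  obtain ⟨h9, h10⟩ := abs_le.1 h8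
  refine ⟨hPle, hPge, by linarith, ?_⟩
  have h11 : ‖pr x - pr y‖ ≤ (2 - a) * ‖M (P z)‖ := by linarith
  have h12 : a * (2 - a) ≤ 1 := by nlinarith [sq_nonneg (1 - a)]
  calc a * ‖pr x - pr y‖ ≤ a * ((2 - a) * ‖M (P z)‖) := by gcongr
    _ = (a * (2 - a)) * ‖M (P z)‖ := by ring
    _ ≤ 1 * ‖M (P z)‖ := by gcongr
    _ = _ := one_mul _

lemma local_est (m : ℕ) (S : Set (En (m + 1))) (x0 u : En (m + 1)) (hx0 : x0 ≠ 0)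
    (hu : ‖u‖ = 1) (hk : ⟪pr x0, u⟫ ≠ 0)
    (hflat : ∀ ε > 0, ∃ U : Set (En (m + 1)), IsOpen U ∧ x0 ∈ U ∧
      ∀ x ∈ U ∩ S, ∀ y ∈ U ∩ S, |⟪x - y, u⟫| ≤ ε * ‖x - y‖)
    (c : ℝ) (hc : 1 < c) :
    ∃ U : Set (En (m + 1)), IsOpen U ∧ x0 ∈ U ∧ ∀ A ⊆ U ∩ S,
      μH[(m : ℝ)] (pr '' A) ≤
        ENNReal.ofReal (c ^ m) * (ENNReal.ofReal (‖x0‖⁻¹ ^ m * |⟪pr x0, u⟫|) * μH[(m : ℝ)] A) ∧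
      ENNReal.ofReal (‖x0‖⁻¹ ^ m * |⟪pr x0, u⟫|) * μH[(m : ℝ)] A ≤
        ENNReal.ofReal (c ^ m) * (ENNReal.ofReal (c ^ m) * μH[(m : ℝ)] (pr '' A)) := by
  have hc0 : 0 < c := by linarith
  obtain ⟨P, M, hdet, U, hU, hxU, h⟩ := local_dist m S x0 u hx0 hu hk hflat c⁻¹ (by positivity)
    (inv_lt_one_of_one_lt₀ hc)
  refine ⟨U, hU, hxU, fun A hA => ?_⟩
  rw [← hdet]
  have hMim : μH[(m : ℝ)] ((fun x => M (P x)) '' A)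
      = ENNReal.ofReal |LinearMap.det M| * μH[(m : ℝ)] (P '' A) := by
    have : Measure.IsAddHaarMeasure (μH[(m : ℝ)] : Measure (En m)) := by
      simpa using MeasureTheory.isAddHaarMeasure_hausdorffMeasure (E := En m)
    rw [← Measure.addHaar_image_linearMap, image_image]
  have key : ∀ {p q : ℝ}, c⁻¹ * p ≤ q → p ≤ c * q := by
    intro p q hpq
    rwa [inv_mul_le_iff₀ hc0] at hpq
  have a1 : μH[(m : ℝ)] (P '' A) ≤ μH[(m : ℝ)] A := by
    have := haus_le P id A 1 zero_le_one m (fun x hx y hy => by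
      rw [dist_eq_norm, id, id, dist_eq_norm, one_mul, ← map_sub]
      exact (h x (hA hx) y (hA hy)).1)
    simpa using this
  have a2 : μH[(m : ℝ)] A ≤ ENNReal.ofReal (c ^ m) * μH[(m : ℝ)] (P '' A) := by
    have := haus_le id P A c hc0.le m (fun x hx y hy => by
      rw [dist_eq_norm, id, id, dist_eq_norm, ← map_sub]
      exact key (h x (hA hx) y (hA hy)).2.1)
    simpa using this
  have a3 : μH[(m : ℝ)] ((fun x => M (P x)) '' A) ≤ ENNReal.ofReal (c ^ m) * μH[(m : ℝ)] (pr '' A) :=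
    haus_le (fun x => M (P x)) pr A c hc0.le m (fun x hx y hy => by
      rw [dist_eq_norm, dist_eq_norm, ← map_sub, ← map_sub]
      exact key (h x (hA hx) y (hA hy)).2.2.1)
  have a4 : μH[(m : ℝ)] (pr '' A) ≤ ENNReal.ofReal (c ^ m) * μH[(m : ℝ)] ((fun x => M (P x)) '' A) :=
    haus_le pr (fun x => M (P x)) A c hc0.le m (fun x hx y hy => by
      rw [dist_eq_norm, dist_eq_norm, ← map_sub, ← map_sub]
      exact key (h x (hA hx) y (hA hy)).2.2.2)
  rw [hMim] at a3 a4
  constructor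
  · refine a4.trans ?_
    gcongr
  · calc _ ≤ ENNReal.ofReal |LinearMap.det M| *
          (ENNReal.ofReal (c ^ m) * μH[(m : ℝ)] (P '' A)) := by gcongr
      _ = ENNReal.ofReal (c ^ m) * (ENNReal.ofReal |LinearMap.det M| * μH[(m : ℝ)] (P '' A)) := by
          ring
      _ ≤ _ := by gcongr
lemma disjoint_image_aux {α β : Type*} {f : α → β} {X A B : Set α} (h : InjOn f X) (hA : A ⊆ X)
    (hB : B ⊆ X) (hd : Disjoint A B) : Disjoint (f '' A) (f '' B) := by
  rw [Set.disjoint_left]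
  rintro _ ⟨x, hx, rfl⟩ ⟨y, hy, hxy⟩
  have := h (hB hy) (hA hx) hxy
  exact Set.disjoint_left.1 hd hx (this ▸ hy)

/-- The Jacobian of the radial projection. -/
def Jac (m : ℕ) (ν : En (m + 1) → En (m + 1)) (x : En (m + 1)) : ℝ :=
  ‖x‖⁻¹ ^ m * |⟪pr x, ν x⟫|

/-- The hypotheses on the surface piece used in the area formula. -/
structure GoodPiece (m : ℕ) (X : Set (En (m + 1))) (ν : En (m + 1) → En (m + 1)) : Prop where
  meas : MeasurableSet X
  cont : ContinuousOn ν X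
  ne0 : ∀ x ∈ X, x ≠ 0
  unit : ∀ x ∈ X, ‖ν x‖ = 1
  trans : ∀ x ∈ X, ⟪pr x, ν x⟫ ≠ 0
  flat : ∀ x0 ∈ X, ∀ ε > 0, ∃ U : Set (En (m + 1)), IsOpen U ∧ x0 ∈ U ∧
      ∀ x ∈ U ∩ X, ∀ y ∈ U ∩ X, |⟪x - y, ν x0⟫| ≤ ε * ‖x - y‖
  inj : InjOn pr X

lemma contOn_pr {n : ℕ} {X : Set (En n)} (h : ∀ x ∈ X, x ≠ 0) : ContinuousOn (pr (n := n)) X := by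
  unfold pr
  exact (continuous_norm.continuousOn.inv₀ (fun x hx => norm_ne_zero_iff.2 (h x hx))).smul
    continuousOn_id

lemma GoodPiece.contJ {m : ℕ} {X : Set (En (m + 1))} {ν : En (m + 1) → En (m + 1)}
    (h : GoodPiece m X ν) : ContinuousOn (Jac m ν) X := by
  unfold Jac
  exact ((continuous_norm.continuousOn.inv₀
    (fun x hx => norm_ne_zero_iff.2 (h.ne0 x hx))).pow m).mul
    (((contOn_pr h.ne0).inner h.cont).abs)

lemma GoodPiece.posJ {m : ℕ} {X : Set (En (m + 1))} {ν : En (m + 1) → En (m + 1)}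
    (h : GoodPiece m X ν) : ∀ x ∈ X, 0 < Jac m ν x := by
  intro x hx
  have := norm_pos_iff.2 (h.ne0 x hx)
  have := abs_pos.2 (h.trans x hx)
  unfold Jac
  positivity

lemma GoodPiece.local2 {m : ℕ} {X : Set (En (m + 1))} {ν : En (m + 1) → En (m + 1)}
    (h : GoodPiece m X ν) (c : ℝ) (hc : 1 < c) (x0 : En (m + 1)) (hx0 : x0 ∈ X) :
    ∃ U : Set (En (m + 1)), IsOpen U ∧ x0 ∈ U ∧ ∀ A ⊆ U ∩ X, MeasurableSet A →
      μH[(m : ℝ)] (pr '' A) ≤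
        ENNReal.ofReal (c ^ (2 * m + 1)) * ∫⁻ x in A, ENNReal.ofReal (Jac m ν x) ∂μH[(m : ℝ)] ∧
      ∫⁻ x in A, ENNReal.ofReal (Jac m ν x) ∂μH[(m : ℝ)] ≤
        ENNReal.ofReal (c ^ (2 * m + 1)) * μH[(m : ℝ)] (pr '' A) := by
  have hc0 : 0 < c := by linarith
  obtain ⟨U1, hU1, hx1, h1⟩ := local_est m X x0 (ν x0) (h.ne0 x0 hx0) (h.unit x0 hx0)
    (h.trans x0 hx0) (h.flat x0 hx0) c hc
  have hJ := h.posJ x0 hx0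
  have hev : ∀ᶠ x in 𝓝[X] x0, Jac m ν x < c * Jac m ν x0 ∧ Jac m ν x0 / c < Jac m ν x := by
    have ht := (h.contJ x0 hx0)
    refine (ht.eventually (gt_mem_nhds ?_)).and (ht.eventually (lt_mem_nhds ?_))
    · nlinarith
    · rw [div_lt_iff₀ hc0]; nlinarith
  obtain ⟨U2, hU2, hx2, h2⟩ := mem_nhdsWithin.1 hev
  refine ⟨U1 ∩ U2, hU1.inter hU2, ⟨hx1, hx2⟩, fun A hA hAm => ?_⟩
  obtain ⟨e1, e2⟩ := h1 A (fun x hx => ⟨(hA hx).1.1, (hA hx).2⟩)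
  change _ ≤ _ * (ENNReal.ofReal (Jac m ν x0) * _) at e1
  change ENNReal.ofReal (Jac m ν x0) * _ ≤ _ at e2
  have hup : ∫⁻ x in A, ENNReal.ofReal (Jac m ν x) ∂μH[(m : ℝ)] ≤
      ENNReal.ofReal c * (ENNReal.ofReal (Jac m ν x0) * μH[(m : ℝ)] A) := by
    rw [← mul_assoc, ← ENNReal.ofReal_mul hc0.le, ← setLIntegral_const]
    refine setLIntegral_mono' hAm fun x hx => ENNReal.ofReal_le_ofReal ?_
    exact (h2 ⟨(hA hx).1.2, (hA hx).2⟩).1.le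
  have hlo : ENNReal.ofReal (Jac m ν x0) * μH[(m : ℝ)] A ≤
      ENNReal.ofReal c * ∫⁻ x in A, ENNReal.ofReal (Jac m ν x) ∂μH[(m : ℝ)] := by
    rw [← lintegral_const_mul' _ _ ENNReal.ofReal_ne_top, ← setLIntegral_const]
    refine setLIntegral_mono' hAm fun x hx => ?_
    rw [← ENNReal.ofReal_mul hc0.le]
    apply ENNReal.ofReal_le_ofReal
    have := (h2 ⟨(hA hx).1.2, (hA hx).2⟩).2.le
    rw [div_le_iff₀ hc0] at this
    linarith
  have hpow : c ^ m * c ≤ c ^ (2 * m + 1) := by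
    rw [← pow_succ]
    exact pow_le_pow_right₀ hc.le (by omega)
  have hpow2 : c * (c ^ m * c ^ m) = c ^ (2 * m + 1) := by ring
  constructor
  · calc _ ≤ _ := e1
      _ ≤ ENNReal.ofReal (c ^ m) *
          (ENNReal.ofReal c * ∫⁻ x in A, ENNReal.ofReal (Jac m ν x) ∂μH[(m : ℝ)]) := by gcongr
      _ = ENNReal.ofReal (c ^ m * c) * ∫⁻ x in A, ENNReal.ofReal (Jac m ν x) ∂μH[(m : ℝ)] := by
        rw [← mul_assoc, ← ENNReal.ofReal_mul (by positivity)]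
      _ ≤ _ := by gcongr
  · calc _ ≤ _ := hup
      _ ≤ ENNReal.ofReal c *
          (ENNReal.ofReal (c ^ m) * (ENNReal.ofReal (c ^ m) * μH[(m : ℝ)] (pr '' A))) := by gcongr
      _ = _ := by
        rw [← mul_assoc (ENNReal.ofReal (c ^ m)), ← ENNReal.ofReal_mul (by positivity),
          ← mul_assoc, ← ENNReal.ofReal_mul (by positivity), hpow2]

lemma GoodPiece.global {m : ℕ} {X : Set (En (m + 1))} {ν : En (m + 1) → En (m + 1)}
    (h : GoodPiece m X ν) (c : ℝ) (hc : 1 < c) (A : Set (En (m + 1))) (hAX : A ⊆ X)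
    (hA : MeasurableSet A) :
      μH[(m : ℝ)] (pr '' A) ≤
        ENNReal.ofReal (c ^ (2 * m + 1)) * ∫⁻ x in A, ENNReal.ofReal (Jac m ν x) ∂μH[(m : ℝ)] ∧
      ∫⁻ x in A, ENNReal.ofReal (Jac m ν x) ∂μH[(m : ℝ)] ≤
        ENNReal.ofReal (c ^ (2 * m + 1)) * μH[(m : ℝ)] (pr '' A) := by
  rcases A.eq_empty_or_nonempty with rfl | ⟨a, haA⟩
  · simp
  choose! U hUo hxU hU using h.local2 c hc
  obtain ⟨t, htX, htc, hcov⟩ := TopologicalSpace.countable_cover_nhdsWithin (s := X) (f := U)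
    (fun x hx => mem_nhdsWithin_of_mem_nhds ((hUo x hx).mem_nhds (hxU x hx)))
  have htne : t.Nonempty := by
    by_contra hne
    rw [not_nonempty_iff_eq_empty] at hne
    have := hcov (hAX haA)
    simp [hne] at this
  obtain ⟨f, hf⟩ := htc.exists_eq_range htne
  have hfX : ∀ i, f i ∈ X := fun i => htX (hf ▸ mem_range_self i)
  set V : ℕ → Set (En (m + 1)) := fun i => U (f i) with hV
  set B : ℕ → Set (En (m + 1)) := fun i => A ∩ disjointed V i with hB
  have hBm : ∀ i, MeasurableSet (B i) := fun i =>
    hA.inter (MeasurableSet.disjointed (fun j => (hUo _ (hfX j)).measurableSet) i)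
  have hBd : Pairwise (Function.onFun Disjoint B) := fun i j hij =>
    (disjoint_disjointed V hij).mono inter_subset_right inter_subset_right
  have hBU : A = ⋃ i, B i := by
    rw [hB, ← inter_iUnion, iUnion_disjointed, eq_comm, inter_eq_left]
    refine (hAX.trans hcov).trans ?_
    rw [hf, biUnion_range]
  have hBX : ∀ i, B i ⊆ X := fun i => inter_subset_left.trans hAX
  have hBloc : ∀ i, B i ⊆ U (f i) ∩ X := fun i x hx => ⟨disjointed_subset V i hx.2, hBX i hx⟩
  have hL : μH[(m : ℝ)] (pr '' A) = ∑' i, μH[(m : ℝ)] (pr '' (B i)) := by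
    conv_lhs => rw [hBU, image_iUnion]
    refine measure_iUnion (fun i j hij => ?_) (fun i => ?_)
    · exact (disjoint_image_aux h.inj (hBX i) (hBX j) (hBd hij))
    · exact (hBm i).image_of_continuousOn_injOn ((contOn_pr h.ne0).mono (hBX i))
        (h.inj.mono (hBX i))
  have hR : ∫⁻ x in A, ENNReal.ofReal (Jac m ν x) ∂μH[(m : ℝ)]
      = ∑' i, ∫⁻ x in B i, ENNReal.ofReal (Jac m ν x) ∂μH[(m : ℝ)] := by
    conv_lhs => rw [hBU]
    exact lintegral_iUnion hBm hBd _
  rw [hL, hR, ← ENNReal.tsum_mul_left, ← ENNReal.tsum_mul_left]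
  exact ⟨ENNReal.tsum_le_tsum fun i => (hU _ (hfX i) _ (hBloc i) (hBm i)).1,
    ENNReal.tsum_le_tsum fun i => (hU _ (hfX i) _ (hBloc i) (hBm i)).2⟩

lemma le_of_forall_c (k : ℕ) (a b : ℝ≥0∞)
    (h : ∀ c : ℝ, 1 < c → a ≤ ENNReal.ofReal (c ^ k) * b) : a ≤ b := by
  have h1 : Tendsto (fun c : ℝ => ENNReal.ofReal (c ^ k) * b) (𝓝[>] 1)
      (𝓝 (ENNReal.ofReal (1 ^ k) * b)) := by
    refine ENNReal.Tendsto.mul_const ?_ (Or.inl (by simp))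
    exact ((ENNReal.continuous_ofReal.comp (continuous_pow k)).tendsto 1).mono_left
      nhdsWithin_le_nhds
  have h2 := ge_of_tendsto h1 (by
    filter_upwards [self_mem_nhdsWithin] with c hc using h c hc)
  simpa using h2

lemma GoodPiece.area {m : ℕ} {X : Set (En (m + 1))} {ν : En (m + 1) → En (m + 1)}
    (h : GoodPiece m X ν) (A : Set (En (m + 1))) (hAX : A ⊆ X) (hA : MeasurableSet A) :
    μH[(m : ℝ)] (pr '' A) = ∫⁻ x in A, ENNReal.ofReal (Jac m ν x) ∂μH[(m : ℝ)] :=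
  le_antisymm (le_of_forall_c (2 * m + 1) _ _ fun c hc => (h.global c hc A hAX hA).1)
    (le_of_forall_c (2 * m + 1) _ _ fun c hc => (h.global c hc A hAX hA).2)

/-- Change of variables for the radial projection. -/
lemma GoodPiece.integral {m : ℕ} {X : Set (En (m + 1))} {ν : En (m + 1) → En (m + 1)}
    (h : GoodPiece m X ν) (G : En (m + 1) → ℝ) :
    ∫ v in pr '' X, G v ∂μH[(m : ℝ)] = ∫ x in X, Jac m ν x * G (pr x) ∂μH[(m : ℝ)] := by
  have hcont : Continuous (fun x : X => pr (x : En (m + 1))) :=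
    continuousOn_iff_continuous_domRestrict.1 (contOn_pr h.ne0)
  have hXm := h.meas
  have hemb : MeasurableEmbedding (fun x : X => pr (x : En (m + 1))) := by
    refine ⟨fun x y hxy => Subtype.ext (h.inj x.2 y.2 hxy), hcont.measurable, fun s hs => ?_⟩
    have h1 : MeasurableSet (Subtype.val '' s) :=
      (MeasurableEmbedding.subtype_coe hXm).measurableSet_image.2 hs
    have h2 : (Subtype.val '' s) ⊆ X := by rintro _ ⟨x, -, rfl⟩; exact x.2
    have := h1.image_of_continuousOn_injOn ((contOn_pr h.ne0).mono h2) (h.inj.mono h2)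
    rwa [image_image] at this
  have hJm : AEMeasurable (fun x => ENNReal.ofReal (Jac m ν x)) (μH[(m : ℝ)].restrict X) :=
    (h.contJ.aemeasurable hXm).ennreal_ofReal
  set D := (μH[(m : ℝ)].restrict X).withDensity (fun x => ENNReal.ofReal (Jac m ν x)) with hD
  have key : μH[(m : ℝ)].restrict (pr '' X)
      = (Measure.comap Subtype.val D).map (fun x : X => pr (x : En (m + 1))) := by
    ext s hs
    have hpm : MeasurableSet ((fun x : X => pr (x : En (m + 1))) ⁻¹' s) := hcont.measurable hs
    have him : MeasurableSet (Subtype.val '' ((fun x : X => pr (x : En (m + 1))) ⁻¹' s)) :=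
      (MeasurableEmbedding.subtype_coe hXm).measurableSet_image.2 hpm
    have h2 : (Subtype.val '' ((fun x : X => pr (x : En (m + 1))) ⁻¹' s)) ⊆ X := by
      rintro _ ⟨x, -, rfl⟩; exact x.2
    rw [Measure.restrict_apply hs, hemb.map_apply,
      (MeasurableEmbedding.subtype_coe hXm).comap_apply, hD, withDensity_apply _ him,
      Measure.restrict_restrict him, inter_eq_left.2 h2, ← h.area _ h2 him]
    congr 1
    ext v
    constructor
    · rintro ⟨hv, x, hx, rfl⟩
      exact ⟨x, ⟨⟨x, hx⟩, hv, rfl⟩, rfl⟩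
    · rintro ⟨_, ⟨x, hxs, rfl⟩, rfl⟩
      exact ⟨hxs, x, x.2, rfl⟩
  rw [key, hemb.integral_map, integral_subtype_comap hXm (fun x => G (pr x)), hD,
    restrict_withDensity hXm, Measure.restrict_restrict hXm, inter_self,
    integral_withDensity_eq_integral_toReal_smul₀ hJm (by simp)]
  refine setIntegral_congr_fun hXm fun x hx => ?_
  simp only [smul_eq_mul]
  rw [ENNReal.toReal_ofReal (h.posJ x hx).le]

lemma proj_closed {E F : Type*} [TopologicalSpace E] [TopologicalSpace F] {T : Set F}
    (hT : IsCompact T) {N : Set (E × F)} (hN : IsClosed N) :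
    IsClosed {x : E | ∃ t ∈ T, (x, t) ∈ N} := by
  have : CompactSpace T := isCompact_iff_compactSpace.1 hT
  have h1 : IsClosed ((fun p : E × T => (p.1, (p.2 : F))) ⁻¹' N) :=
    hN.preimage (by fun_prop)
  have h2 := isClosedMap_fst_of_compactSpace (X := E) (Y := T) _ h1
  convert h2 using 1
  ext x
  constructor
  · rintro ⟨t, ht, hx⟩
    exact ⟨(x, ⟨t, ht⟩), hx, rfl⟩
  · rintro ⟨⟨y, t⟩, hy, rfl⟩
    exact ⟨t, t.2, hy⟩

lemma closed_normal {n : ℕ} (K : Set (En n)) :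
    IsClosed {p : En n × En n | ∀ y ∈ K, ⟪y, p.2⟫ ≤ ⟪p.1, p.2⟫} := by
  simp only [setOf_forall]
  refine isClosed_iInter fun y => isClosed_iInter fun _ => isClosed_le ?_ ?_
  · fun_prop
  · fun_prop

lemma nuMap_eq {n : ℕ} {K : Set (En n)} {x u : En n} (h : normalsAt n K x = {u}) :
    nuMap n K x = u := by
  have h1 : ∃ u, normalsAt n K x = {u} := ⟨u, h⟩
  have h2 : nuMap n K x = h1.choose := by unfold nuMap; rw [dif_pos h1]
  have h3 := h1.choose_spec
  rw [h2]
  exact singleton_injective (h3.symm.trans h)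

lemma normal_near {n : ℕ} {K : Set (En n)} {x0 u : En n} (h : normalsAt n K x0 = {u})
    (ε : ℝ) (hε : 0 < ε) :
    ∃ U : Set (En n), IsOpen U ∧ x0 ∈ U ∧ ∀ x ∈ U, ∀ w ∈ normalsAt n K x, ‖w - u‖ < ε := by
  have hT : IsCompact (Metric.sphere (0 : En n) 1 ∩ (Metric.ball u ε)ᶜ) :=
    (isCompact_sphere 0 1).inter_right Metric.isOpen_ball.isClosed_compl
  have hc := proj_closed hT (closed_normal K)
  refine ⟨_, hc.isOpen_compl, ?_, fun x hx w hw => ?_⟩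
  · rintro ⟨t, ⟨ht1, ht2⟩, ht3⟩
    have h1 : t ∈ normalsAt n K x0 := ⟨by simpa using ht1, ht3⟩
    rw [h] at h1
    rw [mem_singleton_iff] at h1
    subst h1
    exact ht2 (Metric.mem_ball_self hε)
  · by_contra hcon
    refine hx ⟨w, ⟨by simpa using hw.1, ?_⟩, hw.2⟩
    rw [mem_compl_iff, Metric.mem_ball, dist_eq_norm]
    exact hcon

lemma nu_cont {n : ℕ} {K : Set (En n)} :
    ContinuousOn (nuMap n K) {x | ∃ u, normalsAt n K x = {u}} := by
  rintro x0 ⟨u, hu⟩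
  rw [ContinuousWithinAt, Metric.tendsto_nhds]
  intro ε hε
  obtain ⟨U, hU, hxU, h⟩ := normal_near hu ε hε
  filter_upwards [mem_nhdsWithin_of_mem_nhds (hU.mem_nhds hxU), self_mem_nhdsWithin] with x hx hx2
  obtain ⟨w, hw⟩ := hx2
  rw [nuMap_eq hw, nuMap_eq hu, dist_eq_norm]
  exact h x hx w (hw ▸ mem_singleton w)

lemma meas_reg {n : ℕ} {K : Set (En n)} :
    MeasurableSet {x | ∃ u, normalsAt n K x = {u}} := by
  have h1 : MeasurableSet {x | ∃ u ∈ Metric.sphere (0 : En n) 1,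
      (x, u) ∈ {p : En n × En n | ∀ y ∈ K, ⟪y, p.2⟫ ≤ ⟪p.1, p.2⟫}} :=
    (proj_closed (isCompact_sphere 0 1) (closed_normal K)).measurableSet
  have h2 : ∀ k : ℕ, MeasurableSet {x : En n |
      ∃ t ∈ (Metric.sphere (0 : En n) 1 ×ˢ Metric.sphere (0 : En n) 1),
      (x, t) ∈ {p : En n × (En n × En n) | (∀ y ∈ K, ⟪y, p.2.1⟫ ≤ ⟪p.1, p.2.1⟫) ∧
        (∀ y ∈ K, ⟪y, p.2.2⟫ ≤ ⟪p.1, p.2.2⟫) ∧ 1 / ((k : ℝ) + 1) ≤ dist p.2.1 p.2.2}} := by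
    intro k
    refine (proj_closed ((isCompact_sphere 0 1).prod (isCompact_sphere 0 1)) ?_).measurableSet
    have c1 : IsClosed {p : En n × (En n × En n) | ∀ y ∈ K, ⟪y, p.2.1⟫ ≤ ⟪p.1, p.2.1⟫} :=
      (closed_normal K).preimage (f := fun p : En n × (En n × En n) => (p.1, p.2.1)) (by fun_prop)
    have c2 : IsClosed {p : En n × (En n × En n) | ∀ y ∈ K, ⟪y, p.2.2⟫ ≤ ⟪p.1, p.2.2⟫} :=
      (closed_normal K).preimage (f := fun p : En n × (En n × En n) => (p.1, p.2.2)) (by fun_prop)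
    have c3 : IsClosed {p : En n × (En n × En n) | 1 / ((k : ℝ) + 1) ≤ dist p.2.1 p.2.2} :=
      isClosed_le continuous_const (by fun_prop)
    exact c1.inter (c2.inter c3)
  convert h1.diff (MeasurableSet.iUnion h2) using 1
  ext x
  constructor
  · rintro ⟨u, hu⟩
    have huu : u ∈ normalsAt n K x := hu ▸ mem_singleton u
    refine ⟨⟨u, by simpa using huu.1, huu.2⟩, ?_⟩
    intro hx
    obtain ⟨k, ⟨a, b⟩, ⟨ha, hb⟩, h3, h4, h5⟩ := mem_iUnion.1 hx
    have ha' : a ∈ normalsAt n K x := ⟨by simpa using ha, h3⟩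
    have hb' : b ∈ normalsAt n K x := ⟨by simpa using hb, h4⟩
    rw [hu, mem_singleton_iff] at ha' hb'
    simp only [ha', hb', dist_self] at h5
    have : 0 < 1 / ((k : ℝ) + 1) := by positivity
    linarith
  · rintro ⟨⟨u, hu1, hu2⟩, hx⟩
    refine ⟨u, eq_singleton_iff_unique_mem.2 ⟨⟨by simpa using hu1, hu2⟩, fun w hw => ?_⟩⟩
    by_contra hne
    obtain ⟨k, hk⟩ := exists_nat_one_div_lt (dist_pos.2 hne)
    refine hx (mem_iUnion.2 ⟨k, (w, u), ⟨by simpa using hw.1, hu1⟩, hw.2, hu2, hk.le⟩)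

lemma nuInv_eq {n : ℕ} {K ω : Set (En n)} :
    nuInv n K ω = (frontier K ∩ {x | ∃ u, normalsAt n K x = {u}}) ∩ nuMap n K ⁻¹' ω := by
  ext x
  constructor
  · rintro ⟨hx, u, hu, h⟩
    exact ⟨⟨hx, u, h⟩, by rw [mem_preimage, nuMap_eq h]; exact hu⟩
  · rintro ⟨⟨hx, u, h⟩, h2⟩
    rw [mem_preimage, nuMap_eq h] at h2
    exact ⟨hx, u, h2, h⟩

lemma meas_nuInv {n : ℕ} {K ω : Set (En n)} (hω : MeasurableSet ω) :
    MeasurableSet (nuInv n K ω) := by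
  rw [nuInv_eq]
  have hR : MeasurableSet (frontier K ∩ {x | ∃ u, normalsAt n K x = {u}}) :=
    isClosed_frontier.measurableSet.inter meas_reg
  have hc : Continuous (fun x : ↥(frontier K ∩ {x | ∃ u, normalsAt n K x = {u}}) =>
      nuMap n K x) :=
    continuousOn_iff_continuous_domRestrict.1 (nu_cont.mono inter_subset_right)
  have := (MeasurableEmbedding.subtype_coe hR).measurableSet_image.2 (hc.measurable hω)
  convert this using 1
  ext x
  constructor
  · rintro ⟨h1, h2⟩
    exact ⟨⟨x, h1⟩, h2, rfl⟩
  · rintro ⟨y, h1, rfl⟩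
    exact ⟨y.2, h1⟩

lemma K_sub_C {n : ℕ} {C K : Set (En n)} (hK : IsCPseudoCone n C K) : K ⊆ C := by
  obtain ⟨⟨-, hcl, hcv, -, hsc⟩, rfl⟩ := hK
  intro x hx y hy t ht
  rcases ht.eq_or_lt with rfl | ht
  · simpa using hy
  have h1 : Tendsto (fun ε : ℝ => (1 - ε) • y + t • x) (𝓝[>] 0) (𝓝 ((1 - 0 : ℝ) • y + t • x)) :=
    ((Continuous.tendsto (by fun_prop) 0)).mono_left nhdsWithin_le_nhds
  have h2 : ∀ᶠ ε : ℝ in 𝓝[>] 0, (1 - ε) • y + t • x ∈ K := by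
    filter_upwards [Ioo_mem_nhdsGT (lt_min zero_lt_one ht)] with ε hε
    have hε0 := hε.1
    have hε1 := hε.2.trans_le (min_le_left _ _)
    have hεt := hε.2.trans_le (min_le_right _ _)
    have h3 : (t / ε) • x ∈ K := hsc (t / ε) ((one_le_div hε0).2 hεt.le) (smul_mem_smul_set hx)
    have h4 := hcv hy h3 (sub_nonneg.2 hε1.le) hε0.le (by ring)
    rwa [smul_smul, mul_div_cancel₀ _ hε0.ne'] at h4
  have h5 := hcl.mem_of_tendsto h1 h2
  simpa using h5

lemma dual_neg {n : ℕ} {C : Set (En n)} {u x : En n} (hu : u ∈ interior (dualCone n C))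
    (hx : x ∈ C) (hx0 : x ≠ 0) : ⟪x, u⟫ < 0 := by
  have h1 : Tendsto (fun ε : ℝ => u + ε • x) (𝓝[>] 0) (𝓝 (u + (0 : ℝ) • x)) :=
    ((Continuous.tendsto (by fun_prop) 0)).mono_left nhdsWithin_le_nhds
  rw [zero_smul, add_zero] at h1
  have h2 := h1.eventually (mem_interior_iff_mem_nhds.1 hu)
  obtain ⟨ε, hε, hε0⟩ := (h2.and self_mem_nhdsWithin).exists
  have h3 := hε x hx
  rw [inner_add_left, inner_smul_left, real_inner_self_eq_norm_sq, real_inner_comm] at h3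
  simp only [conj_trivial] at h3
  have h4 : 0 < ε * ‖x‖ ^ 2 := mul_pos hε0 (by have := norm_pos_iff.2 hx0; positivity)
  linarith

lemma nuInv_facts {n : ℕ} {C K ω : Set (En n)} (hC : IsGoodCone n C) (hK : IsCPseudoCone n C K)
    (hω : ω ⊆ omegaDual n C) {x : En n} (hx : x ∈ nuInv n K ω) :
    x ∈ K ∧ x ≠ 0 ∧ x ∈ interior C ∧ ⟪x, nuMap n K x⟫ < 0 ∧
      normalsAt n K x = {nuMap n K x} ∧ nuMap n K x ∈ ω := by
  obtain ⟨hxf, u, hu, hn⟩ := hx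
  have hKC := K_sub_C hK
  rw [nuMap_eq hn]
  have hxK : x ∈ K := hK.1.2.1.frontier_subset hxf
  have hx0 : x ≠ 0 := by rintro rfl; exact hK.1.2.2.2.1 hxK
  have hneg := dual_neg (hω hu).2 (hKC hxK) hx0
  refine ⟨hxK, hx0, ?_, hneg, hn, hu⟩
  by_contra hxi
  obtain ⟨f, hf0, hf⟩ := geometric_hahn_banach_of_nonempty_interior_point hC.2.1 hxi hC.2.2.2.2
  have h0C : (0 : En n) ∈ C := by
    have := hC.2.2.1 x (hKC hxK) 0 le_rfl
    rwa [zero_smul] at this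
  have h1 := hf 0 h0C
  have h2 := hf ((2 : ℝ) • x) (hC.2.2.1 x (hKC hxK) 2 (by norm_num))
  rw [map_zero] at h1
  rw [map_smul, smul_eq_mul] at h2
  have hfx : f x = 0 := by linarith
  set w := (InnerProductSpace.toDual ℝ (En n)).symm f with hw
  have hwf : ∀ y, ⟪w, y⟫ = f y := fun y => InnerProductSpace.toDual_symm_apply
  have hw0 : w ≠ 0 := by
    rw [hw]; simpa using hf0
  have hwn : 0 < ‖w‖ := norm_pos_iff.2 hw0
  have hmem : ‖w‖⁻¹ • w ∈ normalsAt n K x := by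
    refine ⟨by rw [norm_smul, norm_inv, norm_norm, inv_mul_cancel₀ hwn.ne'], fun y hy => ?_⟩
    rw [inner_smul_right, inner_smul_right, real_inner_comm, hwf, real_inner_comm, hwf]
    exact mul_le_mul_of_nonneg_left (hf y (hKC hy)) (by positivity)
  rw [hn, mem_singleton_iff] at hmem
  rw [← hmem, inner_smul_right, real_inner_comm, hwf, hfx, mul_zero] at hneg
  exact lt_irrefl _ hneg

lemma rho_pr {n : ℕ} {C K ω : Set (En n)} (hC : IsGoodCone n C) (hK : IsCPseudoCone n C K)
    (hω : ω ⊆ omegaDual n C) {x : En n} (hx : x ∈ nuInv n K ω) :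
    rho n K (pr x) = ‖x‖ ∧ radMap n K (pr x) = x := by
  obtain ⟨hxK, hx0, hxi, hneg, hn, hnu⟩ := nuInv_facts hC hK hω hx
  have hN : 0 < ‖x‖ := norm_pos_iff.2 hx0
  have hsm : ‖x‖ • pr x = x := by
    rw [pr, smul_smul, mul_inv_cancel₀ hN.ne', one_smul]
  have h1 : rho n K (pr x) = ‖x‖ := by
    refine IsLeast.csInf_eq ⟨?_, ?_⟩
    · change ‖x‖ • pr x ∈ K
      rwa [hsm]
    · intro t ht
      have hmem : nuMap n K x ∈ normalsAt n K x := by rw [hn]; exact mem_singleton _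
      have h2 := hmem.2 _ ht
      rw [pr, smul_smul, inner_smul_left] at h2
      simp only [conj_trivial] at h2
      by_contra hlt
      have h3 : t * ‖x‖⁻¹ < 1 := by
        rw [← div_eq_mul_inv, div_lt_one hN]; exact not_le.1 hlt
      nlinarith
  exact ⟨h1, by rw [radMap, h1, hsm]⟩

lemma alphaInv_eq {n : ℕ} {C K ω : Set (En n)} (hC : IsGoodCone n C) (hK : IsCPseudoCone n C K)
    (hω : ω ⊆ omegaDual n C) : alphaInv n C K ω = pr '' nuInv n K ω := by
  ext v
  constructor
  · rintro ⟨⟨hv1, hv2⟩, h1, h2, u, hu, h3⟩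
    have hx : radMap n K v ∈ nuInv n K ω := ⟨h1, u, hu, h3⟩
    refine ⟨_, hx, ?_⟩
    have hvn : ‖v‖ = 1 := by simpa using hv1
    have hv0 : v ≠ 0 := by rintro rfl; simp at hvn
    obtain ⟨hxK, hx0, hxi, hneg, hn, hnu⟩ := nuInv_facts hC hK hω hx
    have h4 := dual_neg (hω hnu).2 (interior_subset hv2) hv0
    have hr : 0 < rho n K v := by
      unfold radMap at hneg
      rw [inner_smul_left] at hneg
      simp only [conj_trivial] at hneg
      change _ * ⟪v, nuMap n K (radMap n K v)⟫ < 0 at hneg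
      by_contra hle
      nlinarith
    rw [pr, radMap, norm_smul, hvn, mul_one, Real.norm_eq_abs, abs_of_pos hr, smul_smul,
      inv_mul_cancel₀ hr.ne', one_smul]
  · rintro ⟨x, hx, rfl⟩
    obtain ⟨hxK, hx0, hxi, hneg, hn, hnu⟩ := nuInv_facts hC hK hω hx
    have hN : 0 < ‖x‖ := norm_pos_iff.2 hx0
    obtain ⟨-, h2⟩ := rho_pr hC hK hω hx
    refine ⟨⟨?_, ?_⟩, ?_⟩
    · rw [mem_sphere_zero_iff_norm, pr, norm_smul, norm_inv, norm_norm, inv_mul_cancel₀ hN.ne']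
    · have h3 : ‖x‖⁻¹ • C ⊆ C := by
        rintro _ ⟨y, hy, rfl⟩
        exact hC.2.2.1 y hy _ (by positivity)
      have h4 := interior_mono h3
      rw [interior_smul₀ (by positivity)] at h4
      exact h4 (smul_mem_smul_set hxi)
    · rw [h2]
      exact ⟨hx.1, hxi, hx.2⟩

lemma goodPiece {m : ℕ} {C K ω : Set (En (m + 1))} (hC : IsGoodCone (m + 1) C)
    (hK : IsCPseudoCone (m + 1) C K) (hω : MeasurableSet ω) (hωs : ω ⊆ omegaDual (m + 1) C) :
    GoodPiece m (nuInv (m + 1) K ω) (nuMap (m + 1) K) where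
  meas := meas_nuInv hω
  cont := nu_cont.mono (fun x hx => ⟨_, (nuInv_facts hC hK hωs hx).2.2.2.2.1⟩)
  ne0 := fun x hx => (nuInv_facts hC hK hωs hx).2.1
  unit := fun x hx => by
    obtain ⟨hxK, hx0, hxi, hneg, hn, hnu⟩ := nuInv_facts hC hK hωs hx
    simpa using (hωs hnu).1
  trans := fun x hx => by
    obtain ⟨hxK, hx0, hxi, hneg, hn, hnu⟩ := nuInv_facts hC hK hωs hx
    rw [pr, inner_smul_left]
    exact mul_ne_zero (by simpa using hx0) hneg.ne
  flat := fun x0 hx0 ε hε => by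
    obtain ⟨U, hU, hxU, h⟩ := normal_near (nuInv_facts hC hK hωs hx0).2.2.2.2.1 ε hε
    refine ⟨U, hU, hxU, ?_⟩
    have key : ∀ x ∈ U ∩ nuInv (m + 1) K ω, ∀ y ∈ U ∩ nuInv (m + 1) K ω,
        ⟪y - x, nuMap (m + 1) K x0⟫ ≤ ε * ‖y - x‖ := by
      rintro x ⟨hx1, hx2⟩ y ⟨hy1, hy2⟩
      obtain ⟨-, -, -, -, hn, -⟩ := nuInv_facts hC hK hωs hx2
      have hmem : nuMap (m + 1) K x ∈ normalsAt (m + 1) K x := by rw [hn]; exact mem_singleton _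
      have h1 := h x hx1 _ hmem
      have h2 := hmem.2 y (nuInv_facts hC hK hωs hy2).1
      have h3 : ⟪y - x, nuMap (m + 1) K x0⟫ = ⟪y - x, nuMap (m + 1) K x⟫
          - ⟪y - x, nuMap (m + 1) K x - nuMap (m + 1) K x0⟫ := by
        rw [inner_sub_right]; ring
      have h4 : ⟪y - x, nuMap (m + 1) K x⟫ ≤ 0 := by rw [inner_sub_left]; linarith
      have h5 := (abs_le.1 (abs_real_inner_le_norm (y - x)
        (nuMap (m + 1) K x - nuMap (m + 1) K x0))).1
      have h6 := mul_le_mul_of_nonneg_left h1.le (norm_nonneg (y - x))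
      linarith
    intro x hx y hy
    rw [abs_le]
    refine ⟨?_, key y hy x hx⟩
    have := key x hx y hy
    rw [← neg_sub x y, inner_neg_left, norm_neg] at this
    linarith
  inj := fun x hx y hy hxy => by
    rw [← (rho_pr hC hK hωs hx).2, ← (rho_pr hC hK hωs hy).2, hxy]

lemma surf_integral {m : ℕ} {C K ω : Set (En (m + 1))} (hC : IsGoodCone (m + 1) C)
    (q : ℝ) (Θ : En (m + 1) → ℝ) (hΘ : IsThetaWeight (m + 1) C q Θ)
    (hK : IsCPseudoCone (m + 1) C K) (hω : MeasurableSet ω) (hωs : ω ⊆ omegaDual (m + 1) C)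
    (g : En (m + 1) → ℝ) (hgm : Measurable g)
    (μ : Measure (En (m + 1))) (hμ : RepsSurf (m + 1) C Θ K μ) :
    ∫ u in ω, g u ∂μ =
      ∫ x in nuInv (m + 1) K ω, Θ x * g (nuMap (m + 1) K x) ∂μH[(m : ℝ)] := by
  classical
  have hG := goodPiece hC hK hω hωs
  set X := nuInv (m + 1) K ω with hX
  have hXm := hG.meas
  have hXC : X ⊆ C \ {0} := fun x hx =>
    ⟨K_sub_C hK (nuInv_facts hC hK hωs hx).1, (nuInv_facts hC hK hωs hx).2.1⟩
  set ν' : En (m + 1) → En (m + 1) := X.piecewise (nuMap (m + 1) K) 0 with hν'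
  have hνm : Measurable ν' :=
    hG.cont.measurable_piecewise continuousOn_const hXm
  have hνX : ∀ x ∈ X, ν' x = nuMap (m + 1) K x := fun x hx => piecewise_eq_of_mem _ _ _ hx
  have hΘm : AEMeasurable (fun x => ENNReal.ofReal (Θ x)) (μH[(m : ℝ)].restrict X) :=
    ((hΘ.1.mono hXC).aemeasurable hXm).ennreal_ofReal
  have key : μ.restrict ω =
      ((μH[(m : ℝ)].restrict X).withDensity (fun x => ENNReal.ofReal (Θ x))).map ν' := by
    ext s hs
    have hset : ν' ⁻¹' s ∩ X = nuInv (m + 1) K (s ∩ ω) := by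
      ext x
      constructor
      · rintro ⟨h1, h2⟩
        have h1' : ν' x ∈ s := h1
        rw [hνX x h2] at h1'
        obtain ⟨hxK, hx0, hxi, hneg, hn, hnu⟩ := nuInv_facts hC hK hωs h2
        exact ⟨h2.1, _, ⟨h1', hnu⟩, hn⟩
      · rintro ⟨h1, u, ⟨hu1, hu2⟩, hn⟩
        have h2 : x ∈ X := ⟨h1, u, hu2, hn⟩
        refine ⟨?_, h2⟩
        rw [mem_preimage, hνX x h2, nuMap_eq hn]
        exact hu1
    rw [Measure.restrict_apply hs, hμ.2 _ (hs.inter hω) (inter_subset_right.trans hωs),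
      Measure.map_apply hνm hs, withDensity_apply _ (hνm hs), Measure.restrict_restrict (hνm hs),
      hset, surfTheta]
    simp
  rw [key, integral_map hνm.aemeasurable hgm.aestronglyMeasurable,
    integral_withDensity_eq_integral_toReal_smul₀ hΘm (by simp)]
  refine setIntegral_congr_fun hXm fun x hx => ?_
  simp only [smul_eq_mul]
  rw [ENNReal.toReal_ofReal (hΘ.2.1 x (hXC hx)).le, hνX x hx]

/-- For `K ∈ ps(C)`, a nonempty Borel set `ω ⊆ Ω_{C°}` and bounded
measurable `g : ω → ℝ`,
`∫_ω g dS_{n-1}^Θ(K,·) = ∫_{α_K^{-1}(ω)} g(α_K v) Θ(r_K v) ρ_K(v)^{n-1}/|⟨v,α_K v⟩| dv`,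
where `dv` is spherical Lebesgue measure (the `(n-1)`-dimensional Hausdorff measure on the
unit sphere). -/
theorem statement10 (n : ℕ) (hn : 2 ≤ n) (C : Set (En n)) (hC : IsGoodCone n C)
    (q : ℝ) (hq1 : (n : ℝ) - 1 < q) (hq2 : q < n)
    (Θ : En n → ℝ) (hΘ : IsThetaWeight n C q Θ)
    (K : Set (En n)) (hK : IsCPseudoCone n C K)
    (ω : Set (En n)) (hωne : ω.Nonempty) (hω : MeasurableSet ω) (hωsub : ω ⊆ omegaDual n C)
    (g : En n → ℝ) (hgm : Measurable g) (hgb : ∃ M : ℝ, ∀ u ∈ ω, |g u| ≤ M)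
    (μ : Measure (En n)) (hμ : RepsSurf n C Θ K μ) :
    ∫ u in ω, g u ∂μ =
      ∫ v in alphaInv n C K ω,
        g (nuMap n K (radMap n K v)) * Θ (radMap n K v) * rho n K v ^ (n - 1) /
          |⟪v, nuMap n K (radMap n K v)⟫| ∂(μH[(n : ℝ) - 1]) := by
  obtain ⟨m, rfl⟩ : ∃ m, n = m + 1 := ⟨n - 1, by omega⟩
  have hG := goodPiece hC hK hω hωsub
  have hm : (((m + 1 : ℕ) : ℝ) - 1) = (m : ℝ) := by push_cast; ring
  rw [surf_integral hC q Θ hΘ hK hω hωsub g hgm μ hμ, alphaInv_eq hC hK hωsub, hm, hG.integral]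
  refine setIntegral_congr_fun hG.meas fun x hx => ?_
  obtain ⟨h1, h2⟩ := rho_pr hC hK hωsub hx
  have h3 : ‖x‖ ≠ 0 := norm_ne_zero_iff.2 (hG.ne0 x hx)
  have h4 : |⟪pr x, nuMap (m + 1) K x⟫| ≠ 0 := abs_ne_zero.2 (hG.trans x hx)
  simp only [h1, h2, Jac, Nat.add_sub_cancel]
  field_simp
  rw [mul_assoc, ← mul_pow, one_div, inv_mul_cancel₀ h3, one_pow, mul_one]
end
end
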